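/- arXiv:2209.11714 — 2 statements merged into one kernel-verified Lean document; each statement's English description precedes it below -/
import Mathlib

section
/- Kinetic energy localization inequality (Brietzke–Fournais–Solovej): Let χ∈C_c^∞(ℝ³) be real and even with 0≤χ≤1 is not required, but ∫χ²=1 and supp χ ⊂ [-1/2,1/2]³. Then there exist b>0 and s₀>0 such that for all s∈(0,s₀), all L>0 and all f∈𝒮(ℝ³): ∫_{ℝ³}|∇f|² dx ≥ ∫_{ℝ³} [ (2π)^{-3} ∫_{ℝ³} ( |p|² − (4s²L²)^{-1} )_+ |(χ_u Q_u f)^∧(p)|² dp + (b/L²)·‖Q_u f‖²_{L²} ] du, where (t)_+ = max(t,0). -/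
open MeasureTheory Filter Real

noncomputable section

abbrev Vec3 := Fin 3 → ℝ

/-- The Fourier transform `ĝ(p) = ∫ e^{ip·x} g(x) dx`. -/
def ftC (g : Vec3 → ℂ) (p : Vec3) : ℂ :=
  ∫ x : Vec3, Complex.exp (Complex.I * ((∑ k, p k * x k : ℝ) : ℂ)) * g x

/-- The unit cube `[-1/2,1/2]³`. -/
def cube : Set Vec3 := {x : Vec3 | ∀ k, x k ∈ Set.Icc (-(1 : ℝ)/2) (1/2)}

/-- `θ`, the indicator function of the unit cube. -/
def θind : Vec3 → ℝ := Set.indicator cube fun _ => 1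

/-- `θ_u(x) = θ(x/L − u)`, the indicator of the cube of side `L` centered at `uL`. -/
def θu (L : ℝ) (u x : Vec3) : ℝ := θind (L⁻¹ • x - u)

/-- `χ_u(x) = χ(x/L − u)`. -/
def χu (χ : Vec3 → ℝ) (L : ℝ) (u x : Vec3) : ℝ := χ (L⁻¹ • x - u)

/-- The projection `Q_u φ = θ_u φ − L⁻³ ⟨θ_u, φ⟩ θ_u`. -/
def Qu (L : ℝ) (u : Vec3) (φ : Vec3 → ℂ) (x : Vec3) : ℂ :=
  (θu L u x : ℂ) * φ x
    - ((L : ℂ) ^ 3)⁻¹ * (∫ y : Vec3, (θu L u y : ℂ) * φ y) * (θu L u x : ℂ)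

section

open scoped FourierTransform SchwartzMap ENNReal LineDeriv

/-- The Plancherel identity for functions in `L¹ ∩ L²`. -/
theorem lintegral_fourier_enorm_sq {V : Type*} [NormedAddCommGroup V] [InnerProductSpace ℝ V]
    [FiniteDimensional ℝ V] [MeasurableSpace V] [BorelSpace V] (m : V → ℂ)
    (h1 : Integrable m) (h2 : MemLp m 2) :
    ∫⁻ ξ, ‖𝓕 m ξ‖ₑ ^ 2 = ∫⁻ x, ‖m x‖ₑ ^ 2 := by
  set M : Lp ℂ 2 (volume : Measure V) := h2.toLp m
  set G : Lp ℂ 2 (volume : Measure V) := 𝓕 M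
  have key : ∀ᵐ x, G x = 𝓕 m x := by
    refine ae_eq_of_integral_contDiff_smul_eq ((Lp.memLp G).locallyIntegrable (by norm_num)) ?_ ?_
    · exact (VectorFourier.fourierIntegral_continuous Real.continuous_fourierChar
        (L := innerₗ V) continuous_inner h1).locallyIntegrable
    · intro g hg hgs
      have hgc : HasCompactSupport (fun x => (g x : ℂ)) := hgs.comp_left Complex.ofReal_zero
      have hgd : ContDiff ℝ (⊤ : ℕ∞) (fun x => (g x : ℂ)) := Complex.ofRealCLM.contDiff.comp hg
      let φ : 𝓢(V, ℂ) := hgc.toSchwartzMap hgd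
      have e1 : (Lp.toTemperedDistribution G) φ = (Lp.toTemperedDistribution M) (𝓕 φ) := by
        rw [← TemperedDistribution.fourier_apply, Lp.fourier_toTemperedDistribution_eq]
      rw [Lp.toTemperedDistribution_apply, Lp.toTemperedDistribution_apply] at e1
      have e2 : ∫ x, 𝓕 φ x • M x = ∫ x, 𝓕 φ x • m x := by
        refine integral_congr_ae ?_
        filter_upwards [h2.coeFn_toLp] with x hx
        rw [hx]
      have e3 : ∫ x, 𝓕 φ x • m x = ∫ x, φ x • 𝓕 m x := by
        simpa using! VectorFourier.integral_fourierIntegral_smul_eq_flip (L := innerₗ V)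
          Real.continuous_fourierChar continuous_inner φ.integrable h1
      have e4 : ∀ x, φ x = (g x : ℂ) := fun x => rfl
      have := e1.trans (e2.trans e3)
      simpa [e4] using this
  have hG : ∫⁻ x, ‖G x‖ₑ ^ 2 = ∫⁻ x, ‖𝓕 m x‖ₑ ^ 2 := by
    refine lintegral_congr_ae ?_
    filter_upwards [key] with x hx
    rw [hx]
  have hM : ∫⁻ x, ‖M x‖ₑ ^ 2 = ∫⁻ x, ‖m x‖ₑ ^ 2 := by
    refine lintegral_congr_ae ?_
    filter_upwards [h2.coeFn_toLp] with x hx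
    rw [hx]
  have hn : ‖G‖ₑ = ‖M‖ₑ := by
    rw [← ofReal_norm, ← ofReal_norm, Lp.norm_fourier_eq]
  rw [Lp.enorm_def, Lp.enorm_def, eLpNorm_eq_lintegral_rpow_enorm_toReal (by norm_num) (by norm_num),
    eLpNorm_eq_lintegral_rpow_enorm_toReal (by norm_num) (by norm_num)] at hn
  have := ENNReal.rpow_left_injective (x := (1 / (2:ℝ≥0∞).toReal)) (by norm_num) hn
  simp only [ENNReal.toReal_ofNat, ENNReal.rpow_ofNat] at this
  rw [← hG, ← hM]; exact this

/-- Three-dimensional Euclidean space. -/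
abbrev E3 := EuclideanSpace ℝ (Fin 3)

theorem ftC_eq_fourier (g : Vec3 → ℂ) (p : Vec3) :
    ftC g p = 𝓕 (fun v : E3 => g v.ofLp) (WithLp.toLp 2 (-(2 * π)⁻¹ • p)) := by
  rw [Real.fourier_eq', ftC, ← (PiLp.volume_preserving_ofLp (Fin 3)).integral_comp
    (MeasurableEquiv.toLp 2 (Fin 3 → ℝ)).symm.measurableEmbedding]
  refine integral_congr_ae (ae_of_all _ fun v => ?_)
  simp only [smul_eq_mul, PiLp.inner_apply]
  congr 2
  simp only [RCLike.inner_apply, conj_trivial, Pi.smul_apply, smul_eq_mul]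
  have : (-2 * π * ∑ i, -(2 * π)⁻¹ * p i * v.ofLp i) = ∑ k, p k * v.ofLp k := by
    rw [Finset.mul_sum]
    refine Finset.sum_congr rfl fun i _ => ?_
    field_simp
  rw [this, mul_comm]

theorem lintegral_comp_smul_vec3 (F : Vec3 → ℝ≥0∞) {r : ℝ} (hr : r ≠ 0) :
    ∫⁻ x, F (r • x) = ENNReal.ofReal (|r| ^ 3)⁻¹ * ∫⁻ x, F x := by
  have h := (Homeomorph.smulOfNeZero r hr : Vec3 ≃ₜ Vec3).toMeasurableEquiv.measurableEmbedding
  have := h.lintegral_map (μ := volume) F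
  have h3 : Measure.map (fun x : Vec3 => r • x) volume = ENNReal.ofReal (|r| ^ 3)⁻¹ • volume := by
    rw [Measure.map_addHaar_smul _ hr]; simp
  change ∫⁻ a, F a ∂(Measure.map (fun x : Vec3 => r • x) volume) = ∫⁻ a, F (r • a) at this
  rw [h3, lintegral_smul_measure] at this
  rw [← this]; rfl

theorem lintegral_ftC_enorm_sq (m : Vec3 → ℂ) (h1 : Integrable m) (h2 : MemLp m 2) :
    ∫⁻ p, ‖ftC m p‖ₑ ^ 2 = ENNReal.ofReal ((2 * π) ^ 3) * ∫⁻ x, ‖m x‖ₑ ^ 2 := by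
  have hv := PiLp.volume_preserving_ofLp (Fin 3)
  have he := (MeasurableEquiv.toLp 2 (Fin 3 → ℝ)).symm.measurableEmbedding
  have hv' := PiLp.volume_preserving_toLp (Fin 3)
  have he' := (MeasurableEquiv.toLp 2 (Fin 3 → ℝ)).measurableEmbedding
  have hh1 : Integrable (fun v : E3 => m v.ofLp) := (hv.integrable_comp_emb he).2 h1
  have hh2 : MemLp (fun v : E3 => m v.ofLp) 2 := h2.comp_measurePreserving hv
  have := lintegral_fourier_enorm_sq _ hh1 hh2
  have e1 : ∫⁻ v : E3, ‖m v.ofLp‖ₑ ^ 2 = ∫⁻ x, ‖m x‖ₑ ^ 2 :=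
    hv.lintegral_comp_emb he (fun x => ‖m x‖ₑ ^ 2)
  rw [← e1, ← this, ← hv'.lintegral_comp_emb he']
  simp_rw [ftC_eq_fourier]
  rw [lintegral_comp_smul_vec3
    (fun x => ‖𝓕 (fun v : E3 => m v.ofLp) (WithLp.toLp 2 x)‖ₑ ^ 2)]
  · congr 2
    rw [abs_neg, abs_of_pos (by positivity), inv_pow, inv_inv]
  · have := Real.pi_pos
    exact neg_ne_zero.2 (by positivity)

/-- The linear equivalence `p ↦ -p / (2 * π)` from `Vec3` to the Euclidean space. -/
def freqEquiv : Vec3 ≃L[ℝ] E3 :=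
  (ContinuousLinearEquiv.smulLeft (R₁ := ℝ) (M₁ := Vec3)
    (Units.mk0 (-(2 * π)⁻¹) (neg_ne_zero.2 (inv_ne_zero (mul_ne_zero two_ne_zero Real.pi_ne_zero))))).trans
    (PiLp.continuousLinearEquiv 2 ℝ (fun _ : Fin 3 => ℝ)).symm

/-- A Schwartz function on `Vec3`, transported to the Euclidean space. -/
def toE3 (f : 𝓢(Vec3, ℂ)) : 𝓢(E3, ℂ) :=
  SchwartzMap.compCLMOfContinuousLinearEquiv ℂ
    (PiLp.continuousLinearEquiv 2 ℝ (fun _ : Fin 3 => ℝ)) f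

/-- The Fourier transform of a Schwartz function, as a Schwartz function. -/
def ftS (f : 𝓢(Vec3, ℂ)) : 𝓢(Vec3, ℂ) :=
  SchwartzMap.compCLMOfContinuousLinearEquiv ℂ freqEquiv (𝓕 (toE3 f))

theorem ftS_apply (f : 𝓢(Vec3, ℂ)) (p : Vec3) : ftS f p = ftC f p := by
  rw [ftC_eq_fourier]
  rfl

theorem ftC_ftS (f : 𝓢(Vec3, ℂ)) (x : Vec3) :
    ftC (ftS f) x = (2 * π) ^ 3 * f (-x) := by
  have hv' := PiLp.volume_preserving_toLp (Fin 3)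
  have he' := (MeasurableEquiv.toLp 2 (Fin 3 → ℝ)).measurableEmbedding
  have h1 : f (-x) = (𝓕⁻ (𝓕 (toE3 f))) (WithLp.toLp 2 (-x)) := by
    rw [FourierTransform.fourierInv_fourier_eq]; rfl
  rw [h1, SchwartzMap.fourierInv_coe, Real.fourierInv_eq', ← hv'.integral_comp he', ftC]
  have h2 := Measure.integral_comp_smul (volume : Measure Vec3)
    (fun v : Vec3 => Complex.exp (((2 * π * inner ℝ (WithLp.toLp 2 v : E3) (WithLp.toLp 2 (-x)) : ℝ) : ℂ)
      * Complex.I) • (𝓕 (toE3 f)) (WithLp.toLp 2 v)) (-(2 * π)⁻¹)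
  have h3 : ∫ v : Vec3, Complex.exp (((2 * π * inner ℝ (WithLp.toLp 2 (-(2 * π)⁻¹ • v) : E3)
      (WithLp.toLp 2 (-x)) : ℝ) : ℂ) * Complex.I) • (𝓕 (toE3 f)) (WithLp.toLp 2 (-(2 * π)⁻¹ • v))
      = ∫ p : Vec3, Complex.exp (Complex.I * ((∑ k, x k * p k : ℝ) : ℂ)) * ftS f p := by
    refine integral_congr_ae (ae_of_all _ fun v => ?_)
    have h4 : (𝓕 (toE3 f)) (WithLp.toLp 2 (-(2 * π)⁻¹ • v)) = ftS f v := rfl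
    simp only [smul_eq_mul, PiLp.inner_apply, h4]
    congr 2
    simp only [RCLike.inner_apply, conj_trivial, Pi.smul_apply, smul_eq_mul, Pi.neg_apply]
    have : (2 * π * ∑ i, -x i * (-(2 * π)⁻¹ * v i)) = ∑ k, x k * v k := by
      rw [Finset.mul_sum]
      refine Finset.sum_congr rfl fun i _ => ?_
      field_simp
    rw [this, mul_comm]
  rw [← h3, h2]
  simp only [Module.finrank_fintype_fun_eq_card, Fintype.card_fin, Complex.real_smul]
  congr 1
  rw [abs_inv, abs_pow, abs_neg, abs_inv, abs_of_pos (by positivity : (0:ℝ) < 2 * π)]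
  push_cast
  rw [inv_pow, inv_inv]

theorem schwartz_inversion (f : 𝓢(Vec3, ℂ)) (x : Vec3) :
    f x = ((2 * π : ℂ) ^ 3)⁻¹ * ftC (ftS f) (-x) := by
  rw [ftC_ftS, neg_neg, ← mul_assoc, inv_mul_cancel₀, one_mul]
  have := Real.pi_ne_zero
  simp [this]

theorem norm_ftC_fderiv (f : 𝓢(Vec3, ℂ)) (i : Fin 3) (p : Vec3) :
    ‖ftC (fun x => fderiv ℝ f x (Pi.single i 1)) p‖ ^ 2 = p i ^ 2 * ‖ftS f p‖ ^ 2 := by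
  have e : (fun v : E3 => fderiv ℝ f v.ofLp (Pi.single i 1)) =
      (∂_{(EuclideanSpace.single i 1 : E3)} (toE3 f)) := by
    ext v
    rw [toE3, SchwartzMap.lineDerivOp_compCLMOfContinuousLinearEquiv]
    simp [SchwartzMap.lineDerivOp_apply_eq_fderiv]
    rfl
  rw [ftC_eq_fourier, e, ← SchwartzMap.fourier_coe, SchwartzMap.fourier_lineDerivOp_eq]
  have h2 : (𝓕 (toE3 f)) (WithLp.toLp 2 (-(2 * π)⁻¹ • p)) = ftS f p := rfl
  have : (inner ℝ · (EuclideanSpace.single i 1 : E3)).HasTemperateGrowth := by fun_prop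
  rw [_root_.smul_apply, SchwartzMap.smulLeftCLM_apply_apply this, h2]
  have hpi := Real.pi_pos
  have h3 : inner ℝ (WithLp.toLp 2 (-(2 * π)⁻¹ • p) : E3) (EuclideanSpace.single i 1)
      = -(2 * π)⁻¹ * p i := by
    rw [EuclideanSpace.inner_single_right]; simp
  rw [h3]
  simp only [norm_smul, mul_pow, norm_mul, Complex.norm_real, Complex.norm_I,
    Real.norm_eq_abs, sq_abs, Complex.norm_ofNat, abs_neg, abs_inv, abs_mul]
  simp only [abs_of_pos hpi, Nat.abs_ofNat, inv_pow, mul_pow]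
  field_simp

theorem ofReal_norm_sq (z : ℂ) : ENNReal.ofReal (‖z‖ ^ 2) = ‖z‖ₑ ^ 2 := by
  rw [ENNReal.ofReal_pow (norm_nonneg _), ofReal_norm]

theorem integral_norm_sq_ftC (g : 𝓢(Vec3, ℂ)) :
    ∫ x, ‖g x‖ ^ 2 = ((2 * π) ^ 3)⁻¹ * ∫ p, ‖ftC g p‖ ^ 2 := by
  have h := lintegral_ftC_enorm_sq g g.integrable (g.memLp 2)
  have hc : Continuous (ftC g) := by
    have : ftC g = ftS g := funext fun p => (ftS_apply g p).symm
    rw [this]; exact (ftS g).continuous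
  rw [integral_eq_lintegral_of_nonneg_ae (ae_of_all _ fun _ => by positivity)
      (by have := g.continuous; fun_prop),
    integral_eq_lintegral_of_nonneg_ae (ae_of_all _ fun _ => by positivity) (by fun_prop)]
  simp_rw [ofReal_norm_sq]
  rw [h, ENNReal.toReal_mul, ENNReal.toReal_ofReal (by positivity), ← mul_assoc,
    inv_mul_cancel₀ (by positivity), one_mul]

theorem integrable_weight_norm_sq (g : 𝓢(Vec3, ℂ)) (i : Fin 3) :
    Integrable (fun p => p i ^ 2 * ‖g p‖ ^ 2) := by
  have h0 : (fun p : Vec3 => p i).HasTemperateGrowth :=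
    (ContinuousLinearMap.proj (R := ℝ) (φ := fun _ : Fin 3 => ℝ) i).hasTemperateGrowth
  have := (SchwartzMap.smulLeftCLM ℂ (fun p : Vec3 => p i) g).memLp 2
  have := this.integrable_norm_pow (by norm_num)
  refine this.congr (ae_of_all _ fun p => ?_)
  simp [SchwartzMap.smulLeftCLM_apply_apply h0, mul_pow]

theorem integral_fderiv_sq (f : 𝓢(Vec3, ℂ)) :
    ∫ x : Vec3, ∑ k : Fin 3, ‖fderiv ℝ f x (Pi.single k 1)‖ ^ 2
      = ((2 * π) ^ 3)⁻¹ * ∫ p, (∑ k, p k ^ 2) * ‖ftS f p‖ ^ 2 := by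
  have e : ∀ k : Fin 3, (fun x => fderiv ℝ f x (Pi.single k 1)) =
      (∂_{(Pi.single k 1 : Vec3)} f : 𝓢(Vec3, ℂ)) := fun k => by
    ext x; rw [SchwartzMap.lineDerivOp_apply_eq_fderiv]
  rw [integral_finsetSum _ fun k _ => ?_]
  · simp_rw [Finset.sum_mul]
    rw [integral_finsetSum _ fun k _ => integrable_weight_norm_sq (ftS f) k, Finset.mul_sum]
    refine Finset.sum_congr rfl fun k _ => ?_
    simp_rw [← norm_ftC_fderiv]
    rw [e k, ← integral_norm_sq_ftC, ← e k]
  · have := ((∂_{(Pi.single k 1 : Vec3)} f : 𝓢(Vec3, ℂ)).memLp 2).integrable_norm_pow (by norm_num)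
    rw [← e k] at this
    exact this

/-- The plane wave `e^{ip·x}`. -/
def pw (p x : Vec3) : ℂ := Complex.exp (Complex.I * ((∑ k, p k * x k : ℝ) : ℂ))

theorem ftC_eq_pw (g : Vec3 → ℂ) (p : Vec3) : ftC g p = ∫ x, pw p x * g x := rfl

theorem norm_pw (p x : Vec3) : ‖pw p x‖ = 1 := by
  rw [pw, mul_comm, Complex.norm_exp_ofReal_mul_I]

theorem continuous_pw : Continuous (fun q : Vec3 × Vec3 => pw q.1 q.2) := by
  unfold pw; fun_prop

@[fun_prop]
theorem Continuous.planeWave {X : Type*} [TopologicalSpace X] {a b : X → Vec3} (ha : Continuous a)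
    (hb : Continuous b) : Continuous (fun x => pw (a x) (b x)) :=
  continuous_pw.comp (ha.prodMk hb)

theorem pw_add_left (p q x : Vec3) : pw (p + q) x = pw p x * pw q x := by
  simp only [pw, ← Complex.exp_add, Pi.add_apply, add_mul, Finset.sum_add_distrib]
  push_cast; ring_nf

theorem pw_comm (p x : Vec3) : pw p x = pw x p := by
  simp only [pw, mul_comm]

theorem pw_add_right (p x y : Vec3) : pw p (x + y) = pw p x * pw p y := by
  rw [pw_comm, pw_add_left, pw_comm x, pw_comm y]

theorem pw_neg_left (p x : Vec3) : pw (-p) x = pw p (-x) := by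
  simp [pw]

theorem continuous_ftC {g : Vec3 → ℂ} (hg : Integrable g) : Continuous (ftC g) := by
  have hh : Integrable (fun v : E3 => g v.ofLp) :=
    ((PiLp.volume_preserving_ofLp (Fin 3)).integrable_comp_emb
      (MeasurableEquiv.toLp 2 (Fin 3 → ℝ)).symm.measurableEmbedding).2 hg
  have h1 : Continuous (𝓕 (fun v : E3 => g v.ofLp)) :=
    VectorFourier.fourierIntegral_continuous Real.continuous_fourierChar
        (L := innerₗ E3) continuous_inner hh
  have : ftC g = fun p => 𝓕 (fun v : E3 => g v.ofLp) (freqEquiv p) :=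
    funext fun p => ftC_eq_fourier g p
  rw [this]
  exact h1.comp freqEquiv.continuous

theorem norm_ftC_le (g : Vec3 → ℂ) (p : Vec3) : ‖ftC g p‖ ≤ ∫ x, ‖g x‖ := by
  refine (norm_integral_le_integral_norm _).trans_eq ?_
  refine integral_congr_ae (ae_of_all _ fun x => ?_)
  change ‖pw p x * g x‖ = _
  rw [norm_mul, norm_pw, one_mul]

theorem integrable_pw_mul {g : Vec3 → ℂ} (hg : Integrable g) (p : Vec3) :
    Integrable (fun x => pw p x * g x) :=
  hg.bdd_mul (c := 1) (by fun_prop) (ae_of_all _ fun x => (norm_pw p x).le)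

/-- The function of `u` with Fourier transform `m` times that of `f`. -/
def waveInt (f : 𝓢(Vec3, ℂ)) (m : Vec3 → ℂ) (u : Vec3) : ℂ :=
  ((2 * π : ℂ) ^ 3)⁻¹ * ftC (fun p => m p * ftS f p) (-u)

theorem integrable_mul_ftS (f : 𝓢(Vec3, ℂ)) {m : Vec3 → ℂ} (hm : Continuous m) {C : ℝ}
    (hC : ∀ p, ‖m p‖ ≤ C) : Integrable (fun p => m p * ftS f p) :=
  (ftS f).integrable.bdd_mul hm.aestronglyMeasurable (ae_of_all _ hC)

theorem waveInt_sub (f : 𝓢(Vec3, ℂ)) {m n : Vec3 → ℂ} (hm : Continuous m) (hn : Continuous n)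
    {C D : ℝ} (hC : ∀ p, ‖m p‖ ≤ C) (hD : ∀ p, ‖n p‖ ≤ D) (u : Vec3) :
    waveInt f (fun p => m p - n p) u = waveInt f m u - waveInt f n u := by
  rw [waveInt, waveInt, waveInt, ← mul_sub, ftC_eq_pw, ftC_eq_pw, ftC_eq_pw,
    ← integral_sub (integrable_pw_mul (integrable_mul_ftS f hm hC) _)
      (integrable_pw_mul (integrable_mul_ftS f hn hD) _)]
  simp only [sub_mul, mul_sub]

theorem waveInt_const_mul (f : 𝓢(Vec3, ℂ)) (m : Vec3 → ℂ) (a : ℂ) (u : Vec3) :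
    waveInt f (fun p => a * m p) u = a * waveInt f m u := by
  rw [waveInt, waveInt, ftC_eq_pw, ftC_eq_pw, mul_left_comm, ← integral_const_mul a]
  congr 2; ext p; ring

theorem lintegral_waveInt (f : 𝓢(Vec3, ℂ)) {m : Vec3 → ℂ} (hm : Continuous m) {C : ℝ}
    (hC : ∀ p, ‖m p‖ ≤ C) :
    ∫⁻ u, ‖waveInt f m u‖ₑ ^ 2
      = ENNReal.ofReal ((2 * π) ^ 3)⁻¹ * ∫⁻ p, ‖m p‖ₑ ^ 2 * ‖ftS f p‖ₑ ^ 2 := by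
  have h2 : MemLp (fun p => m p * ftS f p) 2 :=
    ((ftS f).memLp 2).of_le_mul (c := C) (hm.mul (ftS f).continuous).aestronglyMeasurable
      (ae_of_all _ fun p => by
        rw [norm_mul]; exact mul_le_mul_of_nonneg_right (hC p) (norm_nonneg _))
  have h := lintegral_ftC_enorm_sq _ (integrable_mul_ftS f hm hC) h2
  have hc : ‖((2 * π : ℂ) ^ 3)⁻¹‖ₑ = ENNReal.ofReal ((2 * π) ^ 3)⁻¹ := by
    rw [← ofReal_norm]
    simp [abs_of_pos Real.pi_pos]
  have he : ∀ u, ‖waveInt f m u‖ₑ ^ 2 = ENNReal.ofReal ((2 * π) ^ 3)⁻¹ ^ 2 *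
      ‖ftC (fun p => m p * ftS f p) (-u)‖ₑ ^ 2 := fun u => by
    rw [waveInt, enorm_mul, hc, mul_pow]
  simp_rw [he]
  rw [lintegral_const_mul' _ _ (ENNReal.pow_ne_top ENNReal.ofReal_ne_top),
    lintegral_neg_eq_self (fun u => ‖ftC (fun p => m p * ftS f p) u‖ₑ ^ 2), h, ← mul_assoc]
  congr 1
  · rw [← ENNReal.ofReal_pow (by positivity), ← ENNReal.ofReal_mul (by positivity)]
    congr 1
    have := Real.pi_pos
    field_simp
  · simp_rw [enorm_mul, mul_pow]

theorem schwartz_translate_eq (f : 𝓢(Vec3, ℂ)) (y u : Vec3) :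
    f (y + u) = waveInt f (fun p => pw (-y) p) u := by
  rw [schwartz_inversion, waveInt, ftC_eq_pw, ftC_eq_pw]
  congr 2; ext p
  rw [neg_add, pw_add_left]; ring

theorem integral_mul_translate (f : 𝓢(Vec3, ℂ)) {g : Vec3 → ℂ} (hg : Integrable g) (u : Vec3) :
    ∫ y, g y * f (y + u) = waveInt f (fun p => ftC g (-p)) u := by
  have h1 : ∀ y, g y * f (y + u) =
      ((2 * π : ℂ) ^ 3)⁻¹ * ∫ p, g y * (pw (-u) p * (pw (-y) p * ftS f p)) := fun y => by
    rw [schwartz_translate_eq, waveInt, ftC_eq_pw, integral_const_mul]; ring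
  simp_rw [h1]
  rw [integral_const_mul, waveInt, ftC_eq_pw, integral_integral_swap]
  · congr 2; ext p
    rw [ftC_eq_pw, ← integral_mul_const, ← integral_const_mul]
    congr 1; ext y
    rw [pw_neg_left y, pw_comm y]; ring
  · have h2 : Integrable (fun z : Vec3 × Vec3 => g z.1 * ftS f z.2) (volume.prod volume) :=
      hg.mul_prod (ftS f).integrable
    have h3 := h2.bdd_mul (f := fun z : Vec3 × Vec3 => pw (-u) z.2 * pw (-z.1) z.2) (c := 1)
      (by fun_prop) (ae_of_all _ fun z => by simp [norm_pw])
    refine h3.congr (ae_of_all _ fun z => ?_)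
    simp only [Function.uncurry]; ring

theorem measurable_waveInt (f : 𝓢(Vec3, ℂ)) {M : Vec3 → Vec3 → ℂ}
    (hM : Continuous (fun z : Vec3 × Vec3 => M z.1 z.2)) :
    Measurable (fun z : Vec3 × Vec3 => waveInt f (M z.1) z.2) := by
  have : StronglyMeasurable (fun z : Vec3 × Vec3 => ∫ p, pw (-z.2) p * (M z.1 p * ftS f p)) := by
    have h : Continuous (fun w : (Vec3 × Vec3) × Vec3 =>
        pw (-w.1.2) w.2 * (M w.1.1 w.2 * ftS f w.2)) := by
      have h1 := hM.comp (f := fun w : (Vec3 × Vec3) × Vec3 => (w.1.1, w.2)) (by fun_prop)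
      have h2 := (ftS f).continuous
      exact (by fun_prop : Continuous (fun w : (Vec3 × Vec3) × Vec3 => pw (-w.1.2) w.2)).mul
        (h1.mul (h2.comp continuous_snd))
    exact h.stronglyMeasurable.integral_prod_right'
  exact this.measurable.const_mul _

theorem lintegral_lintegral_waveInt (f : 𝓢(Vec3, ℂ)) {M : Vec3 → Vec3 → ℂ}
    (hM : Continuous (fun z : Vec3 × Vec3 => M z.1 z.2)) (hC : ∀ k, ∃ C, ∀ p, ‖M k p‖ ≤ C)
    {w : Vec3 → ℝ≥0∞} (hw : Measurable w) :
    ∫⁻ u, ∫⁻ k, w k * ‖waveInt f (M k) u‖ₑ ^ 2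
      = ENNReal.ofReal ((2 * π) ^ 3)⁻¹ *
        ∫⁻ p, (∫⁻ k, w k * ‖M k p‖ₑ ^ 2) * ‖ftS f p‖ₑ ^ 2 := by
  have hf := (ftS f).continuous.measurable
  have h1 := measurable_waveInt f hM
  rw [lintegral_lintegral_swap]
  · have e1 : ∀ k, ∫⁻ u, w k * ‖waveInt f (M k) u‖ₑ ^ 2 =
      ENNReal.ofReal ((2 * π) ^ 3)⁻¹ * ∫⁻ p, w k * ‖M k p‖ₑ ^ 2 * ‖ftS f p‖ₑ ^ 2 := fun k => by
      have hk : Continuous (M k) := hM.comp (f := fun p => (k, p)) (by fun_prop)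
      obtain ⟨C, hC⟩ := hC k
      have h2 : Measurable (waveInt f (M k)) := by
        have := h1.comp (measurable_prodMk_left (x := k))
        exact this
      have h3 : Measurable (fun u => ‖waveInt f (M k) u‖ₑ ^ 2) := h2.enorm.pow_const 2
      rw [lintegral_const_mul _ h3,
        lintegral_waveInt f hk hC, mul_left_comm, ← lintegral_const_mul]
      · simp_rw [mul_assoc]
      · have := hk.measurable
        fun_prop
    simp_rw [e1]
    rw [lintegral_const_mul' _ _ ENNReal.ofReal_ne_top, lintegral_lintegral_swap]
    · congr 1
      refine lintegral_congr fun p => ?_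
      have hk : Continuous (fun k => M k p) := hM.comp (f := fun k => (k, p)) (by fun_prop)
      have := hk.measurable
      rw [lintegral_mul_const]
      fun_prop
    · have := hM.measurable
      exact (((hw.comp measurable_fst).mul (this.enorm.pow_const 2)).mul
        ((hf.comp measurable_snd).enorm.pow_const 2)).aemeasurable
  · exact ((hw.comp measurable_snd).mul
      ((h1.comp measurable_swap).enorm.pow_const 2)).aemeasurable

theorem cube_eq_Icc : cube = Set.Icc (fun _ => -(1 : ℝ) / 2) (fun _ => 1 / 2) := by
  ext x
  simp [cube, Pi.le_def, forall_and]

theorem measurableSet_cube : MeasurableSet cube := by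
  rw [cube_eq_Icc]; exact measurableSet_Icc

theorem isCompact_cube : IsCompact cube := by
  rw [cube_eq_Icc]; exact isCompact_Icc

theorem volume_cube : volume cube = 1 := by
  rw [cube_eq_Icc, Real.volume_Icc_pi]; norm_num

theorem measurable_θind : Measurable θind := measurable_const.indicator measurableSet_cube

theorem θind_nonneg (x : Vec3) : 0 ≤ θind x := Set.indicator_nonneg (fun _ _ => zero_le_one) x

theorem integrable_θind : Integrable θind := by
  rw [θind, integrable_indicator_iff measurableSet_cube]
  exact integrableOn_const (by simp [volume_cube])

theorem integral_θind : ∫ x, θind x = 1 := by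
  rw [θind, integral_indicator measurableSet_cube]
  simp [Measure.real, volume_cube]

/-- `θ` as a complex-valued function. -/
def θC (x : Vec3) : ℂ := (θind x : ℂ)

theorem integrable_θC : Integrable θC := integrable_θind.ofReal

theorem θu_one (u y : Vec3) : θu 1 u (y + u) = θind y := by simp [θu]

theorem χu_one (χ : Vec3 → ℝ) (u y : Vec3) : χu χ 1 u (y + u) = χ y := by simp [χu]

theorem mul_θind_of_tsupport_subset {χ : Vec3 → ℝ} (hχ : tsupport χ ⊆ cube) (y : Vec3) :
    χ y * θind y = χ y := by
  by_cases hy : y ∈ cube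
  · simp [θind, hy]
  · rw [image_eq_zero_of_notMem_tsupport (fun h => hy (hχ h)), zero_mul]

/-- The symbol of `u ↦ θ`-localized, mean-subtracted evaluation at `y`. -/
def meanSymbol (y p : Vec3) : ℂ := pw (-y) p - ftC θC (-p)

/-- The symbol of `u ↦ (χ_u Q_u f)^(k)`. -/
def boxSymbol (χ : Vec3 → ℂ) (k p : Vec3) : ℂ := ftC χ (k - p) - ftC χ k * ftC θC (-p)

theorem norm_ftC_θC_le (p : Vec3) : ‖ftC θC p‖ ≤ 1 := by
  refine (norm_ftC_le θC p).trans_eq ?_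
  simp_rw [θC, Complex.norm_real, Real.norm_of_nonneg (θind_nonneg _)]
  exact integral_θind

theorem waveInt_meanSymbol (f : 𝓢(Vec3, ℂ)) (y u : Vec3) :
    waveInt f (meanSymbol y) u = f (y + u) - waveInt f (fun p => ftC θC (-p)) u := by
  rw [schwartz_translate_eq]
  exact waveInt_sub f (m := fun p => pw (-y) p) (n := fun p => ftC θC (-p)) (C := 1) (D := 1)
    (by fun_prop) ((continuous_ftC integrable_θC).comp continuous_neg)
    (fun p => (norm_pw _ p).le) (fun p => norm_ftC_θC_le _) u

theorem Qu_one_translate (f : 𝓢(Vec3, ℂ)) (u y : Vec3) :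
    Qu 1 u (fun y => f y) (y + u) = θC y * waveInt f (meanSymbol y) u := by
  have h1 : ∫ z, (θu 1 u z : ℂ) * f z = waveInt f (fun p => ftC θC (-p)) u := by
    rw [← integral_mul_translate f integrable_θC u,
      ← integral_add_right_eq_self _ u]
    simp_rw [θu_one]; rfl
  rw [Qu, h1, θu_one, waveInt_meanSymbol]
  simp only [θC, Complex.ofReal_one, one_pow, inv_one, one_mul]; ring

theorem ftC_pw_mul (g : Vec3 → ℂ) (k p : Vec3) :
    ftC (fun y => pw k y * g y) (-p) = ftC g (k - p) := by
  rw [ftC_eq_pw, ftC_eq_pw]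
  congr 1; ext y
  rw [sub_eq_add_neg, pw_add_left]; ring

theorem ftC_box (f : 𝓢(Vec3, ℂ)) {χ : Vec3 → ℝ} (hχ : tsupport χ ⊆ cube)
    (hχi : Integrable (fun y => (χ y : ℂ))) (u k : Vec3) :
    ftC (fun x => (χu χ 1 u x : ℂ) * Qu 1 u (fun y => f y) x) k
      = pw k u * waveInt f (boxSymbol (fun y => (χ y : ℂ)) k) u := by
  set χC : Vec3 → ℂ := fun y => (χ y : ℂ) with hχC
  have hcχ := continuous_ftC hχi
  have hcθ := continuous_ftC integrable_θC
  have hcf := f.continuous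
  have h0 : ∀ y, χC y * θC y = χC y := fun y => by
    simp only [hχC, θC]; rw [← Complex.ofReal_mul, mul_θind_of_tsupport_subset hχ]
  have hi1 : Integrable (fun y => (pw k y * χC y) * f (y + u)) := by
    obtain ⟨C, hC⟩ : ∃ C, ∀ x, ‖f x‖ ≤ C := ⟨_, fun x => f.norm_le_seminorm ℝ x⟩
    exact (integrable_pw_mul hχi k).mul_bdd (c := C) (by fun_prop) (ae_of_all _ fun y => hC _)
  have hi2 : Integrable (fun y => (pw k y * χC y) * waveInt f (fun p => ftC θC (-p)) u) :=
    (integrable_pw_mul hχi k).mul_const _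
  have e1 : ftC (fun x => (χu χ 1 u x : ℂ) * Qu 1 u (fun y => f y) x) k
      = ∫ y, pw k u * ((pw k y * χC y) * f (y + u)
          - (pw k y * χC y) * waveInt f (fun p => ftC θC (-p)) u) := by
    rw [ftC_eq_pw, ← integral_add_right_eq_self _ u]
    congr 1; ext y
    rw [Qu_one_translate, χu_one, pw_add_right, waveInt_meanSymbol]
    have := h0 y
    simp only [hχC] at this ⊢
    linear_combination (pw k y * pw k u * (f (y + u) - waveInt f (fun p => ftC θC (-p)) u)) * this
  rw [e1, integral_const_mul, integral_sub hi1 hi2,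
    integral_mul_translate f (integrable_pw_mul hχi k), integral_mul_const, ← ftC_eq_pw,
    ← waveInt_const_mul, ← waveInt_sub f (C := ∫ x, ‖χC x‖) (D := ‖ftC χC k‖)]
  · congr 2; ext p
    rw [ftC_pw_mul]; rfl
  · exact (continuous_ftC (integrable_pw_mul hχi k)).comp continuous_neg
  · exact continuous_const.mul (hcθ.comp continuous_neg)
  · intro p
    rw [ftC_pw_mul]
    exact norm_ftC_le _ _
  · intro p
    rw [norm_mul]
    exact mul_le_of_le_one_right (norm_nonneg _) (norm_ftC_θC_le _)

theorem continuous_meanSymbol : Continuous (fun z : Vec3 × Vec3 => meanSymbol z.1 z.2) := by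
  have := continuous_ftC integrable_θC
  unfold meanSymbol
  fun_prop

theorem continuous_boxSymbol {χ : Vec3 → ℂ} (hχ : Integrable χ) :
    Continuous (fun z : Vec3 × Vec3 => boxSymbol χ z.1 z.2) := by
  have := continuous_ftC integrable_θC
  have := continuous_ftC hχ
  unfold boxSymbol
  fun_prop

theorem norm_meanSymbol_le_two (y p : Vec3) : ‖meanSymbol y p‖ ≤ 2 := by
  have h1 := norm_sub_le (pw (-y) p) (ftC θC (-p))
  have h2 := norm_ftC_θC_le (-p)
  rw [norm_pw] at h1
  rw [meanSymbol]; linarith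

theorem norm_boxSymbol_le {χ : Vec3 → ℂ} (k p : Vec3) :
    ‖boxSymbol χ k p‖ ≤ ‖ftC χ (k - p)‖ + ‖ftC χ k‖ := by
  refine (norm_sub_le _ _).trans ?_
  gcongr
  rw [norm_mul]
  exact mul_le_of_le_one_right (norm_nonneg _) (norm_ftC_θC_le _)

theorem ofReal_integral_le_lintegral {X : Type*} [MeasurableSpace X] {μ : Measure X} {F : X → ℝ}
    (hF : ∀ x, 0 ≤ F x) : ENNReal.ofReal (∫ x, F x ∂μ) ≤ ∫⁻ x, ENNReal.ofReal (F x) ∂μ := by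
  by_cases h : Integrable F μ
  · rw [ofReal_integral_eq_lintegral_ofReal h (ae_of_all _ hF)]
  · rw [integral_undef h]; simp

theorem ofReal_localized_le (f : 𝓢(Vec3, ℂ)) {χ : Vec3 → ℝ} (hχ : tsupport χ ⊆ cube)
    (hχi : Integrable (fun y => (χ y : ℂ))) {w : Vec3 → ℝ} (hw : Continuous w)
    (hw0 : ∀ p, 0 ≤ w p) {b : ℝ} (hb : 0 ≤ b) :
    ENNReal.ofReal (∫ u : Vec3, (((2 * π) ^ 3)⁻¹ * ∫ p : Vec3, w p *
        ‖ftC (fun x => (χu χ 1 u x : ℂ) * Qu 1 u (fun y => f y) x) p‖ ^ 2)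
          + b * ∫ x : Vec3, ‖Qu 1 u (fun y => f y) x‖ ^ 2)
      ≤ ENNReal.ofReal ((2 * π) ^ 3)⁻¹ * ∫⁻ p, (ENNReal.ofReal ((2 * π) ^ 3)⁻¹ *
          (∫⁻ k, ENNReal.ofReal (w k) * ‖boxSymbol (fun y => (χ y : ℂ)) k p‖ₑ ^ 2)
          + ENNReal.ofReal b * ∫⁻ y, ENNReal.ofReal (θind y) * ‖meanSymbol y p‖ₑ ^ 2)
            * ‖ftS f p‖ₑ ^ 2 := by
  have hpi : 0 ≤ ((2 * π) ^ 3)⁻¹ := by positivity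
  have hBc := continuous_boxSymbol hχi
  have hwm : Measurable (fun p => ENNReal.ofReal (w p)) := hw.measurable.ennreal_ofReal
  have hθm : Measurable (fun p => ENNReal.ofReal (θind p)) := measurable_θind.ennreal_ofReal
  have hB := lintegral_lintegral_waveInt f hBc (fun k =>
    ⟨(∫ x, ‖(χ x : ℂ)‖) + ‖ftC (fun y => (χ y : ℂ)) k‖, fun p => (norm_boxSymbol_le k p).trans
      (by gcongr; exact norm_ftC_le _ _)⟩) hwm
  have hN := lintegral_lintegral_waveInt f continuous_meanSymbol
    (fun y => ⟨2, norm_meanSymbol_le_two y⟩) hθm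
  have m1 : Measurable (fun u => ∫⁻ k, ENNReal.ofReal (w k) *
      ‖waveInt f (boxSymbol (fun y => (χ y : ℂ)) k) u‖ₑ ^ 2) := by
    refine Measurable.lintegral_prod_right' (f := fun z : Vec3 × Vec3 => ENNReal.ofReal (w z.2) *
      ‖waveInt f (boxSymbol (fun y => (χ y : ℂ)) z.2) z.1‖ₑ ^ 2) ?_
    exact (hwm.comp measurable_snd).mul
      (((measurable_waveInt f hBc).comp measurable_swap).enorm.pow_const 2)
  have m2 : Measurable (fun p => ∫⁻ k, ENNReal.ofReal (w k) *
      ‖boxSymbol (fun y => (χ y : ℂ)) k p‖ₑ ^ 2) := by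
    refine Measurable.lintegral_prod_right' (f := fun z : Vec3 × Vec3 => ENNReal.ofReal (w z.2) *
      ‖boxSymbol (fun y => (χ y : ℂ)) z.2 z.1‖ₑ ^ 2) ?_
    exact (hwm.comp measurable_snd).mul
      ((hBc.measurable.comp measurable_swap).enorm.pow_const 2)
  have hf : Measurable (fun p => ‖ftS f p‖ₑ ^ 2) := (ftS f).continuous.measurable.enorm.pow_const 2
  refine (ofReal_integral_le_lintegral fun u => ?_).trans ?_
  · exact add_nonneg (mul_nonneg hpi (integral_nonneg fun p => mul_nonneg (hw0 p) (by positivity)))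
      (mul_nonneg hb (integral_nonneg fun p => by positivity))
  calc _ ≤ ∫⁻ u, (ENNReal.ofReal ((2 * π) ^ 3)⁻¹ * (∫⁻ k, ENNReal.ofReal (w k) *
              ‖waveInt f (boxSymbol (fun y => (χ y : ℂ)) k) u‖ₑ ^ 2) +
            ENNReal.ofReal b * ∫⁻ y, ENNReal.ofReal (θind y) *
              ‖waveInt f (meanSymbol y) u‖ₑ ^ 2) := by
        refine lintegral_mono fun u => ?_
        refine ENNReal.ofReal_add_le.trans ?_
        rw [ENNReal.ofReal_mul hpi, ENNReal.ofReal_mul hb]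
        gcongr
        · refine (ofReal_integral_le_lintegral fun p =>
            mul_nonneg (hw0 p) (by positivity)).trans_eq ?_
          refine lintegral_congr fun k => ?_
          rw [ENNReal.ofReal_mul (hw0 k), ofReal_norm_sq, ftC_box f hχ hχi, enorm_mul,
            ← ofReal_norm (pw k u), norm_pw, ENNReal.ofReal_one, one_mul]
        · refine (ofReal_integral_le_lintegral fun p => by positivity).trans_eq ?_
          rw [← lintegral_add_right_eq_self _ u]
          refine lintegral_congr fun y => ?_
          rw [ofReal_norm_sq, Qu_one_translate, enorm_mul, mul_pow]
          congr 1
          by_cases hy : y ∈ cube <;> simp [θC, θind, hy]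
    _ = _ := by
        rw [lintegral_add_left (m1.const_mul _), lintegral_const_mul' _ _ ENNReal.ofReal_ne_top,
          lintegral_const_mul' _ _ ENNReal.ofReal_ne_top, hB, hN,
          mul_left_comm (ENNReal.ofReal b), ← mul_add,
          ← lintegral_const_mul' (ENNReal.ofReal b) _ ENNReal.ofReal_ne_top,
          ← lintegral_const_mul' _ _ ENNReal.ofReal_ne_top,
          ← lintegral_add_left (by exact (m2.mul hf).const_mul _)]
        simp_rw [add_mul, mul_assoc]

theorem sq_norm_le_sum_sq (p : Vec3) : ‖p‖ ^ 2 ≤ ∑ k, p k ^ 2 := by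
  have h : ‖p‖ ≤ √(∑ k, p k ^ 2) := by
    refine (pi_norm_le_iff_of_nonneg (Real.sqrt_nonneg _)).2 fun i => ?_
    refine Real.le_sqrt_of_sq_le ?_
    rw [Real.norm_eq_abs, sq_abs]
    exact Finset.single_le_sum (f := fun k => p k ^ 2) (fun k _ => sq_nonneg _) (Finset.mem_univ i)
  calc ‖p‖ ^ 2 ≤ √(∑ k, p k ^ 2) ^ 2 := by gcongr
    _ = _ := Real.sq_sqrt (Finset.sum_nonneg fun k _ => sq_nonneg _)

theorem sum_sq_le_sq_norm (p : Vec3) : ∑ k, p k ^ 2 ≤ 3 * ‖p‖ ^ 2 := by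
  have h : ∀ k ∈ Finset.univ, p k ^ 2 ≤ ‖p‖ ^ 2 := fun k _ => by
    rw [← sq_abs, ← Real.norm_eq_abs]
    have := norm_le_pi_norm p k
    gcongr
  have := Finset.sum_le_sum h
  simpa using this

theorem norm_pw_sub_one_le (p x : Vec3) : ‖pw p x - 1‖ ≤ 3 * ‖p‖ * ‖x‖ := by
  have h1 : ‖pw p x - 1‖ ≤ ‖∑ k, p k * x k‖ := Real.norm_exp_I_mul_ofReal_sub_one_le
  refine h1.trans ((norm_sum_le _ _).trans ?_)
  have h : ∀ k ∈ Finset.univ, ‖p k * x k‖ ≤ ‖p‖ * ‖x‖ := fun k _ => by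
    rw [norm_mul]
    have := norm_le_pi_norm p k
    have := norm_le_pi_norm x k
    gcongr
  have := Finset.sum_le_sum h
  simpa [mul_assoc] using this

theorem norm_le_of_mem_cube {y : Vec3} (hy : y ∈ cube) : ‖y‖ ≤ 1 / 2 := by
  refine (pi_norm_le_iff_of_nonneg (by norm_num)).2 fun i => ?_
  obtain ⟨h1, h2⟩ := hy i
  rw [Real.norm_eq_abs, abs_le]
  exact ⟨by linarith, h2⟩

theorem norm_one_sub_ftC_θC_le (p : Vec3) : ‖1 - ftC θC p‖ ≤ 3 / 2 * ‖p‖ := by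
  have h1 : (1 : ℂ) = ∫ y, θC y := by
    have h := integral_complex_ofReal (f := θind) (μ := volume)
    rw [integral_θind, Complex.ofReal_one] at h
    exact h.symm
  rw [ftC_eq_pw, h1, ← integral_sub integrable_θC (integrable_pw_mul integrable_θC p)]
  calc _ ≤ ∫ y, θind y * (3 / 2 * ‖p‖) := by
        refine norm_integral_le_of_norm_le (integrable_θind.mul_const _) (ae_of_all _ fun y => ?_)
        have h2 : θC y - pw p y * θC y = -(θC y * (pw p y - 1)) := by ring
        rw [h2, norm_neg, norm_mul, θC, Complex.norm_real, Real.norm_of_nonneg (θind_nonneg y)]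
        by_cases hy : y ∈ cube
        · have h3 := norm_pw_sub_one_le p y
          have h4 := norm_le_of_mem_cube hy
          refine mul_le_mul_of_nonneg_left ?_ (θind_nonneg y)
          nlinarith [norm_nonneg p]
        · simp [θind, hy]
    _ = _ := by rw [integral_mul_const, integral_θind, one_mul]

theorem lintegral_meanSymbol_le (p : Vec3) :
    ∫⁻ y, ENNReal.ofReal (θind y) * ‖meanSymbol y p‖ₑ ^ 2
      ≤ ENNReal.ofReal (min 4 (9 * ∑ k, p k ^ 2)) := by
  have hθ : ∫⁻ y, ENNReal.ofReal (θind y) = 1 := by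
    rw [← ofReal_integral_eq_lintegral_ofReal integrable_θind (ae_of_all _ θind_nonneg),
      integral_θind, ENNReal.ofReal_one]
  calc _ ≤ ∫⁻ y, ENNReal.ofReal (θind y) * ENNReal.ofReal (min 4 (9 * ∑ k, p k ^ 2)) := by
        refine lintegral_mono fun y => ?_
        by_cases hy : y ∈ cube
        · gcongr
          rw [← ofReal_norm_sq]
          refine ENNReal.ofReal_le_ofReal (le_min ?_ ?_)
          · nlinarith [norm_meanSymbol_le_two y p, norm_nonneg (meanSymbol y p)]
          · have h1 : meanSymbol y p = (pw (-y) p - 1) + (1 - ftC θC (-p)) := by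
              rw [meanSymbol]; ring
            have h2 := norm_pw_sub_one_le (-y) p
            have h3 := norm_one_sub_ftC_θC_le (-p)
            have h4 := norm_le_of_mem_cube hy
            rw [norm_neg] at h2 h3
            have h5 : ‖meanSymbol y p‖ ≤ 3 * ‖p‖ := by
              rw [h1]
              refine (norm_add_le _ _).trans ?_
              nlinarith [norm_nonneg p]
            have h6 := sq_norm_le_sum_sq p
            have h7 : ‖meanSymbol y p‖ ^ 2 ≤ (3 * ‖p‖) ^ 2 := by gcongr
            nlinarith
        · simp [θind, hy]
    _ = _ := by rw [lintegral_mul_const _ measurable_θind.ennreal_ofReal, hθ, one_mul]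

theorem integrable_sum_sq_mul_norm_sq (g : 𝓢(Vec3, ℂ)) :
    Integrable (fun p => (∑ k, p k ^ 2) * ‖g p‖ ^ 2) := by
  simp_rw [Finset.sum_mul]
  exact integrable_finsetSum _ fun k _ => integrable_weight_norm_sq g k

theorem integrable_sum_sq_mul_norm (g : 𝓢(Vec3, ℂ)) :
    Integrable (fun p => (∑ k, p k ^ 2) * ‖g p‖) := by
  have h := (g.integrable_pow_mul volume 2).const_mul 3
  refine h.mono' (by have := g.continuous; fun_prop) (ae_of_all _ fun p => ?_)
  have h0 : 0 ≤ ∑ k, p k ^ 2 := Finset.sum_nonneg fun k _ => sq_nonneg _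
  rw [Real.norm_of_nonneg (by positivity), ← mul_assoc]
  exact mul_le_mul_of_nonneg_right (sum_sq_le_sq_norm p) (norm_nonneg _)

theorem integrable_norm_sq (g : 𝓢(Vec3, ℂ)) : Integrable (fun p => ‖g p‖ ^ 2) :=
  (g.memLp 2).integrable_norm_pow (by norm_num)

theorem abs_dot_le (q p : Vec3) : |∑ i, q i * p i| ≤ ∑ i, q i ^ 2 + ∑ i, p i ^ 2 := by
  rw [abs_le]
  simp only [Fin.sum_univ_three]
  constructor <;> nlinarith [sq_nonneg (q 0 + p 0), sq_nonneg (q 1 + p 1), sq_nonneg (q 2 + p 2),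
    sq_nonneg (q 0 - p 0), sq_nonneg (q 1 - p 1), sq_nonneg (q 2 - p 2),
    sq_nonneg (q 0), sq_nonneg (q 1), sq_nonneg (q 2), sq_nonneg (p 0), sq_nonneg (p 1),
    sq_nonneg (p 2)]

theorem integrable_dot_mul_norm_sq (g : 𝓢(Vec3, ℂ)) (p : Vec3) :
    Integrable (fun q => (∑ i, q i * p i) * ‖g q‖ ^ 2) := by
  have h := (integrable_sum_sq_mul_norm_sq g).add ((integrable_norm_sq g).const_mul (∑ i, p i ^ 2))
  refine h.mono' (by have := g.continuous; fun_prop) (ae_of_all _ fun q => ?_)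
  simp only [Pi.add_apply]
  rw [norm_mul, Real.norm_of_nonneg (sq_nonneg ‖g q‖), ← add_mul]
  exact mul_le_mul_of_nonneg_right (abs_dot_le q p) (by positivity)

theorem integral_dot_mul_norm_sq_eq_zero {g : 𝓢(Vec3, ℂ)} (hg : ∀ q, g (-q) = g q) (p : Vec3) :
    ∫ q, (∑ i, q i * p i) * ‖g q‖ ^ 2 = 0 := by
  have h := integral_neg_eq_self (fun q : Vec3 => (∑ i, q i * p i) * ‖g q‖ ^ 2) volume
  simp only [hg, Pi.neg_apply, neg_mul, Finset.sum_neg_distrib, integral_neg] at h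
  linarith

/-- A quadratic majorant of a weight bounds the corresponding average of the box symbol. -/
theorem lintegral_boxSymbol_le_of_quadratic {χ : Vec3 → ℂ} {X : 𝓢(Vec3, ℂ)}
    (hX : ∀ p, X p = ftC χ p) (hXe : ∀ q, X (-q) = X q)
    (hX1 : ((2 * π) ^ 3)⁻¹ * ∫ q, ‖X q‖ ^ 2 = 1) :
    ∃ m₂ ≥ (0 : ℝ), ∃ C₁ ≥ (0 : ℝ), ∀ (w : Vec3 → ℝ) (p : Vec3) (α β γ : ℝ), (∀ q, 0 ≤ w q) →
      (∀ q, w q ≤ ∑ i, q i ^ 2) →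
      (∀ q, w (q + p) ≤ α + β * ∑ i, q i * p i + γ * ∑ i, q i ^ 2) →
      ENNReal.ofReal ((2 * π) ^ 3)⁻¹ * ∫⁻ k, ENNReal.ofReal (w k) * ‖boxSymbol χ k p‖ₑ ^ 2
        ≤ ENNReal.ofReal (α + γ * m₂ + C₁) := by
  have hpi : 0 ≤ ((2 * π) ^ 3)⁻¹ := by positivity
  have hs : ∀ q : Vec3, 0 ≤ ∑ i, q i ^ 2 := fun q => Finset.sum_nonneg fun k _ => sq_nonneg _
  obtain ⟨C, hC⟩ : ∃ C, ∀ x, ‖X x‖ ≤ C := ⟨_, fun x => X.norm_le_seminorm ℝ x⟩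
  have hC0 : 0 ≤ C := (norm_nonneg _).trans (hC 0)
  set m₂ := ((2 * π) ^ 3)⁻¹ * ∫ q, (∑ i, q i ^ 2) * ‖X q‖ ^ 2
  set R : Vec3 → ℝ := fun k => 2 * C * ((∑ i, k i ^ 2) * ‖X k‖) + (∑ i, k i ^ 2) * ‖X k‖ ^ 2
    with hR
  have hRi : Integrable R :=
    ((integrable_sum_sq_mul_norm X).const_mul (2 * C)).add (integrable_sum_sq_mul_norm_sq X)
  have hR0 : ∀ k, 0 ≤ R k := fun k => by have := hs k; positivity
  refine ⟨m₂, mul_nonneg hpi (integral_nonneg fun q => by have := hs q; positivity),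
    ((2 * π) ^ 3)⁻¹ * ∫ k, R k, mul_nonneg hpi (integral_nonneg hR0), ?_⟩
  intro w p α β γ hw0 hw1 hw2
  set Q : Vec3 → ℝ := fun q => α * ‖X q‖ ^ 2 + β * ((∑ i, q i * p i) * ‖X q‖ ^ 2)
    + γ * ((∑ i, q i ^ 2) * ‖X q‖ ^ 2) with hQ
  have i1 := (integrable_norm_sq X).const_mul α
  have i2 := (integrable_dot_mul_norm_sq X p).const_mul β
  have i3 := (integrable_sum_sq_mul_norm_sq X).const_mul γ
  have hQi : Integrable Q := (i1.add i2).add i3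
  have hQI : ∫ q, Q q = α * (∫ q, ‖X q‖ ^ 2) + γ * ∫ q, (∑ i, q i ^ 2) * ‖X q‖ ^ 2 := by
    have e1 : ∫ q, Q q = (∫ q, (α * ‖X q‖ ^ 2 + β * ((∑ i, q i * p i) * ‖X q‖ ^ 2)))
      + ∫ q, γ * ((∑ i, q i ^ 2) * ‖X q‖ ^ 2) := integral_add (i1.add i2) i3
    rw [e1, integral_add i1 i2, integral_const_mul, integral_const_mul, integral_const_mul,
      integral_dot_mul_norm_sq_eq_zero hXe]
    ring
  have key : ∀ k, w k * ‖boxSymbol χ k p‖ ^ 2 ≤ Q (k - p) + R k := fun k => by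
    have h1 := norm_boxSymbol_le (χ := χ) k p
    rw [← hX, ← hX] at h1
    have h2 := hw2 (k - p)
    rw [sub_add_cancel] at h2
    have h3 : ‖boxSymbol χ k p‖ ^ 2 ≤ ‖X (k - p)‖ ^ 2 + (2 * C * ‖X k‖ + ‖X k‖ ^ 2) := by
      have h4 : ‖boxSymbol χ k p‖ ^ 2 ≤ (‖X (k - p)‖ + ‖X k‖) ^ 2 := by gcongr
      have h5 := mul_le_mul_of_nonneg_right (hC (k - p)) (norm_nonneg (X k))
      nlinarith
    have h6 := mul_le_mul_of_nonneg_left h3 (hw0 k)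
    have h7 := mul_le_mul_of_nonneg_right h2 (sq_nonneg ‖X (k - p)‖)
    have h8 := mul_le_mul_of_nonneg_right (hw1 k)
      (by positivity : 0 ≤ 2 * C * ‖X k‖ + ‖X k‖ ^ 2)
    simp only [hQ, hR]
    nlinarith
  have hI : ∫⁻ k, ENNReal.ofReal (w k) * ‖boxSymbol χ k p‖ₑ ^ 2
      ≤ ENNReal.ofReal ((∫ q, Q q) + ∫ k, R k) := by
    have hS : Integrable (fun k => Q (k - p) + R k) := (hQi.comp_sub_right p).add hRi
    rw [← integral_sub_right_eq_self Q p, ← integral_add (hQi.comp_sub_right p) hRi,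
      ofReal_integral_eq_lintegral_ofReal hS
        (ae_of_all _ fun k => (mul_nonneg (hw0 k) (sq_nonneg _)).trans (key k))]
    refine lintegral_mono fun k => ?_
    rw [← ofReal_norm_sq, ← ENNReal.ofReal_mul (hw0 k)]
    exact ENNReal.ofReal_le_ofReal (key k)
  refine (mul_le_mul_right hI _).trans ?_
  rw [← ENNReal.ofReal_mul hpi, hQI]
  refine ENNReal.ofReal_le_ofReal (le_of_eq ?_)
  linear_combination α * hX1

theorem SchwartzMap.exists_one_add_norm_pow_mul_iteratedFDeriv_le (X : 𝓢(Vec3, ℂ)) (k n : ℕ) :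
    ∃ M, ∀ x, (1 + ‖x‖) ^ k * ‖iteratedFDeriv ℝ n X x‖ ≤ M :=
  ⟨_, fun x => SchwartzMap.one_add_le_sup_seminorm_apply (𝕜 := ℝ) (m := (k, n)) le_rfl le_rfl X x⟩

theorem SchwartzMap.exists_one_add_norm_pow_mul_norm_sub_le (X : 𝓢(Vec3, ℂ)) (m : ℕ) {R : ℝ}
    (hR : 0 ≤ R) :
    ∃ D ≥ (0 : ℝ), ∀ k p, ‖p‖ ≤ R → (1 + ‖k‖) ^ m * ‖X (k - p) - X k‖ ≤ D * ‖p‖ := by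
  obtain ⟨M, hM⟩ := X.exists_one_add_norm_pow_mul_iteratedFDeriv_le m 1
  have hM0 : 0 ≤ M := le_trans (by positivity) (hM 0)
  refine ⟨(1 + R) ^ m * M, by positivity, fun k p hp => ?_⟩
  have ha : 0 < (1 + ‖k‖) ^ m := by positivity
  have hbound : ∀ y ∈ Metric.closedBall k R, ‖fderiv ℝ X y‖ ≤ (1 + R) ^ m * M / (1 + ‖k‖) ^ m := by
    intro y hy
    rw [le_div_iff₀ ha, ← norm_iteratedFDeriv_one]
    have h1 : 1 + ‖k‖ ≤ (1 + R) * (1 + ‖y‖) := by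
      have h2 : ‖k‖ ≤ ‖y‖ + ‖y - k‖ := by
        have := norm_sub_le y (y - k)
        simpa using this
      rw [Metric.mem_closedBall, dist_eq_norm] at hy
      nlinarith [norm_nonneg y]
    calc ‖iteratedFDeriv ℝ 1 X y‖ * (1 + ‖k‖) ^ m
        ≤ ‖iteratedFDeriv ℝ 1 X y‖ * ((1 + R) * (1 + ‖y‖)) ^ m := by gcongr
      _ = (1 + R) ^ m * ((1 + ‖y‖) ^ m * ‖iteratedFDeriv ℝ 1 X y‖) := by rw [mul_pow]; ring
      _ ≤ _ := by gcongr; exact hM y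
  have h := (convex_closedBall k R).norm_image_sub_le_of_norm_fderiv_le
    (fun x _ => X.differentiableAt) hbound (Metric.mem_closedBall_self hR)
    (y := k - p) (by simpa [dist_eq_norm] using hp)
  rw [sub_sub_cancel_left, norm_neg, div_mul_eq_mul_div, le_div_iff₀ ha] at h
  linarith

theorem integrable_inv_one_add_norm_pow_six : Integrable (fun k : Vec3 => ((1 + ‖k‖) ^ 6)⁻¹) := by
  have h := integrable_one_add_norm (E := Vec3) (μ := volume) (r := 6)
    (by simp; norm_num)
  refine h.congr (ae_of_all _ fun k => ?_)
  simp only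
  rw [Real.rpow_neg (by positivity)]
  norm_cast

/-- For bounded `p`, the average of the box symbol is `O(|p|² / A)`. -/
theorem lintegral_boxSymbol_le_of_le {χ : Vec3 → ℂ} {X : 𝓢(Vec3, ℂ)}
    (hX : ∀ p, X p = ftC χ p) {R : ℝ} (hR : 0 ≤ R) :
    ∃ C₂ ≥ (0 : ℝ), ∀ A > 0, ∀ p : Vec3, ‖p‖ ≤ R →
      ENNReal.ofReal ((2 * π) ^ 3)⁻¹ *
          ∫⁻ k, ENNReal.ofReal (max ((∑ i, k i ^ 2) - A) 0) * ‖boxSymbol χ k p‖ₑ ^ 2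
        ≤ ENNReal.ofReal (C₂ / A * ∑ i, p i ^ 2) := by
  have hpi : 0 ≤ ((2 * π) ^ 3)⁻¹ := by positivity
  obtain ⟨D, hD0, hD⟩ := X.exists_one_add_norm_pow_mul_norm_sub_le 5 hR
  obtain ⟨M, hM⟩ := X.exists_one_add_norm_pow_mul_iteratedFDeriv_le 5 0
  simp only [norm_iteratedFDeriv_zero] at hM
  have hM0 : 0 ≤ M := le_trans (by positivity) (hM 0)
  set K := D + 3 / 2 * M
  have hK : 0 ≤ K := by positivity
  set I := ∫ k : Vec3, ((1 + ‖k‖) ^ 6)⁻¹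
  have hI : 0 ≤ I := integral_nonneg fun k => by positivity
  refine ⟨((2 * π) ^ 3)⁻¹ * (9 * K ^ 2 * I), by positivity, fun A hA p hp => ?_⟩
  have hbox : ∀ k, (1 + ‖k‖) ^ 5 * ‖boxSymbol χ k p‖ ≤ K * ‖p‖ := fun k => by
    have h1 : boxSymbol χ k p = (X (k - p) - X k) + X k * (1 - ftC θC (-p)) := by
      rw [boxSymbol, hX, hX]; ring
    have h2 := norm_one_sub_ftC_θC_le (-p)
    rw [norm_neg] at h2
    calc (1 + ‖k‖) ^ 5 * ‖boxSymbol χ k p‖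
        ≤ (1 + ‖k‖) ^ 5 * (‖X (k - p) - X k‖ + ‖X k‖ * (3 / 2 * ‖p‖)) := by
          rw [h1]
          gcongr
          refine (norm_add_le _ _).trans ?_
          rw [norm_mul]
          gcongr
      _ = (1 + ‖k‖) ^ 5 * ‖X (k - p) - X k‖ + ((1 + ‖k‖) ^ 5 * ‖X k‖) * (3 / 2 * ‖p‖) := by ring
      _ ≤ D * ‖p‖ + M * (3 / 2 * ‖p‖) :=
          add_le_add (hD k p hp) (mul_le_mul_of_nonneg_right (hM k) (by positivity))
      _ = K * ‖p‖ := by ring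
  have key : ∀ k : Vec3, max ((∑ i, k i ^ 2) - A) 0 * ‖boxSymbol χ k p‖ ^ 2
      ≤ 9 * K ^ 2 / A * ‖p‖ ^ 2 * ((1 + ‖k‖) ^ 6)⁻¹ := fun k => by
    have hs : 0 ≤ ∑ i, k i ^ 2 := Finset.sum_nonneg fun k _ => sq_nonneg _
    have hk := norm_nonneg k
    have h1 : max ((∑ i, k i ^ 2) - A) 0 ≤ 9 * (1 + ‖k‖) ^ 4 / A := by
      have h2 : ∑ i, k i ^ 2 ≤ 3 * (1 + ‖k‖) ^ 2 := by
        have := sum_sq_le_sq_norm k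
        nlinarith
      refine max_le ?_ (by positivity)
      rw [le_div_iff₀ hA]
      nlinarith [sq_nonneg ((∑ i, k i ^ 2) - A)]
    rw [← div_eq_mul_inv, le_div_iff₀ (by positivity)]
    calc max ((∑ i, k i ^ 2) - A) 0 * ‖boxSymbol χ k p‖ ^ 2 * (1 + ‖k‖) ^ 6
        ≤ 9 * (1 + ‖k‖) ^ 4 / A * ‖boxSymbol χ k p‖ ^ 2 * (1 + ‖k‖) ^ 6 := by gcongr
      _ = 9 / A * ((1 + ‖k‖) ^ 5 * ‖boxSymbol χ k p‖) ^ 2 := by ring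
      _ ≤ 9 / A * (K * ‖p‖) ^ 2 := by have := hbox k; gcongr
      _ = _ := by ring
  have hL : ∫⁻ k, ENNReal.ofReal (max ((∑ i, k i ^ 2) - A) 0) * ‖boxSymbol χ k p‖ₑ ^ 2
      ≤ ENNReal.ofReal (9 * K ^ 2 / A * ‖p‖ ^ 2 * I) := by
    rw [← integral_const_mul, ofReal_integral_eq_lintegral_ofReal
      (integrable_inv_one_add_norm_pow_six.const_mul _) (ae_of_all _ fun k => by positivity)]
    refine lintegral_mono fun k => ?_
    rw [← ofReal_norm_sq, ← ENNReal.ofReal_mul (le_max_right _ _)]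
    exact ENNReal.ofReal_le_ofReal (key k)
  refine (mul_le_mul_right hL _).trans ?_
  rw [← ENNReal.ofReal_mul hpi]
  refine ENNReal.ofReal_le_ofReal ?_
  calc ((2 * π) ^ 3)⁻¹ * (9 * K ^ 2 / A * ‖p‖ ^ 2 * I)
      = ((2 * π) ^ 3)⁻¹ * (9 * K ^ 2 * I) / A * ‖p‖ ^ 2 := by ring
    _ ≤ _ := by gcongr; exact sq_norm_le_sum_sq p

theorem max_shift_le_of_le {q p : Vec3} {A : ℝ} (hpA : ∑ i, p i ^ 2 ≤ 2 * A) :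
    max ((∑ i, (q + p) i ^ 2) - A) 0
      ≤ 3 / 4 * (∑ i, p i ^ 2) + 0 * (∑ i, q i * p i) + 5 * ∑ i, q i ^ 2 := by
  simp only [Fin.sum_univ_three, Pi.add_apply] at *
  rw [zero_mul, add_zero]
  refine max_le ?_ (by positivity)
  nlinarith [sq_nonneg (p 0 - 4 * q 0), sq_nonneg (p 1 - 4 * q 1), sq_nonneg (p 2 - 4 * q 2)]

theorem max_shift_le_of_ge {q p : Vec3} {A : ℝ} (hpA : 2 * A ≤ ∑ i, p i ^ 2) :
    max ((∑ i, (q + p) i ^ 2) - A) 0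
      ≤ ((∑ i, p i ^ 2) - A) + 2 * (∑ i, q i * p i) + 2 * ∑ i, q i ^ 2 := by
  simp only [Fin.sum_univ_three, Pi.add_apply] at *
  refine max_le ?_ ?_
  · nlinarith [sq_nonneg (q 0), sq_nonneg (q 1), sq_nonneg (q 2)]
  · nlinarith [sq_nonneg (p 0 + 2 * q 0), sq_nonneg (p 1 + 2 * q 1), sq_nonneg (p 2 + 2 * q 2)]

/-- The averaged symbol of the localized kinetic operators is dominated by `|p|²`. -/
theorem exists_symbol_le {χ : Vec3 → ℂ} {X : 𝓢(Vec3, ℂ)}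
    (hX : ∀ p, X p = ftC χ p) (hXe : ∀ q, X (-q) = X q)
    (hX1 : ((2 * π) ^ 3)⁻¹ * ∫ q, ‖X q‖ ^ 2 = 1) :
    ∃ A₀ ≥ (1 : ℝ), ∀ A ≥ A₀, ∀ p : Vec3,
      ENNReal.ofReal ((2 * π) ^ 3)⁻¹ *
          (∫⁻ k, ENNReal.ofReal (max ((∑ i, k i ^ 2) - A) 0) * ‖boxSymbol χ k p‖ₑ ^ 2)
        + ENNReal.ofReal (1 / 18) * ∫⁻ y, ENNReal.ofReal (θind y) * ‖meanSymbol y p‖ₑ ^ 2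
        ≤ ENNReal.ofReal (∑ i, p i ^ 2) := by
  obtain ⟨m₂, hm₂, C₁, hC₁, hquad⟩ := lintegral_boxSymbol_le_of_quadratic hX hXe hX1
  set C₃ := C₁ + 5 * m₂
  have hC₃ : 0 ≤ C₃ := by positivity
  obtain ⟨C₂, hC₂, hsmall⟩ := lintegral_boxSymbol_le_of_le hX (Real.sqrt_nonneg (4 * (C₃ + 1)))
  refine ⟨1 + C₃ + 2 * C₂, by linarith, fun A hA p => ?_⟩
  have hA0 : 0 < A := by linarith
  have hp0 : 0 ≤ ∑ i, p i ^ 2 := Finset.sum_nonneg fun k _ => sq_nonneg _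
  have hmean : ENNReal.ofReal (1 / 18) * ∫⁻ y, ENNReal.ofReal (θind y) * ‖meanSymbol y p‖ₑ ^ 2
      ≤ ENNReal.ofReal (1 / 18 * min 4 (9 * ∑ k, p k ^ 2)) := by
    rw [ENNReal.ofReal_mul (by norm_num)]
    exact mul_le_mul_right (lintegral_meanSymbol_le p) _
  have hmin0 : 0 ≤ min 4 (9 * ∑ k, p k ^ 2) := le_min (by norm_num) (by positivity)
  have hmin4 : min 4 (9 * ∑ k, p k ^ 2) ≤ 4 := min_le_left _ _
  have hmin9 : min 4 (9 * ∑ k, p k ^ 2) ≤ 9 * ∑ k, p k ^ 2 := min_le_right _ _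
  have hw0 : ∀ q : Vec3, 0 ≤ max ((∑ i, q i ^ 2) - A) 0 := fun q => le_max_right _ _
  have hw1 : ∀ q : Vec3, max ((∑ i, q i ^ 2) - A) 0 ≤ ∑ i, q i ^ 2 := fun q =>
    max_le (by linarith) (Finset.sum_nonneg fun k _ => sq_nonneg _)
  suffices ∃ B ≥ (0 : ℝ), ENNReal.ofReal ((2 * π) ^ 3)⁻¹ *
      (∫⁻ k, ENNReal.ofReal (max ((∑ i, k i ^ 2) - A) 0) * ‖boxSymbol χ k p‖ₑ ^ 2)
        ≤ ENNReal.ofReal B ∧ B + 1 / 18 * min 4 (9 * ∑ k, p k ^ 2) ≤ ∑ i, p i ^ 2 by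
    obtain ⟨B, hB0, hB, hBle⟩ := this
    refine (add_le_add hB hmean).trans ?_
    rw [← ENNReal.ofReal_add hB0 (by positivity)]
    exact ENNReal.ofReal_le_ofReal hBle
  rcases le_total (∑ i, p i ^ 2) (4 * (C₃ + 1)) with h | h
  · refine ⟨C₂ / A * ∑ i, p i ^ 2, by positivity, hsmall A hA0 p ?_, ?_⟩
    · exact Real.le_sqrt_of_sq_le ((sq_norm_le_sum_sq p).trans h)
    · have h1 : C₂ / A ≤ 1 / 2 := by
        rw [div_le_iff₀ hA0]; linarith
      nlinarith
  · rcases le_total (∑ i, p i ^ 2) (2 * A) with h' | h'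
    · exact ⟨3 / 4 * (∑ i, p i ^ 2) + 5 * m₂ + C₁, by positivity,
        hquad _ p _ 0 5 hw0 hw1 fun q => max_shift_le_of_le h', by linarith⟩
    · exact ⟨((∑ i, p i ^ 2) - A) + 2 * m₂ + C₁, by linarith,
        hquad _ p _ 2 2 hw0 hw1 fun q => max_shift_le_of_ge h', by linarith⟩

/-- The unit-scale inequality. -/
theorem exists_unit_localization
    (χ : Vec3 → ℝ) (hχsm : ContDiff ℝ (⊤ : ℕ∞) χ) (hχeven : ∀ x, χ (-x) = χ x)
    (hχnorm : ∫ x : Vec3, (χ x) ^ 2 = 1) (hχsupp : tsupport χ ⊆ cube) :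
    ∃ A₀ ≥ (1 : ℝ), ∀ A ≥ A₀, ∀ f : 𝓢(Vec3, ℂ),
      ∫ u : Vec3,
          (((2 * π) ^ 3)⁻¹ *
            ∫ p : Vec3,
              max ((∑ k, (p k) ^ 2) - A) 0 *
                ‖ftC (fun x => (χu χ 1 u x : ℂ) * Qu 1 u (fun y => f y) x) p‖ ^ 2)
          + 1 / 18 * ∫ x : Vec3, ‖Qu 1 u (fun y => f y) x‖ ^ 2
        ≤ ∫ x : Vec3, ∑ k : Fin 3, ‖fderiv ℝ f x (Pi.single k 1)‖ ^ 2 := by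
  have hχc : HasCompactSupport (fun y => (χ y : ℂ)) :=
    HasCompactSupport.comp_left (g := Complex.ofReal)
      (isCompact_cube.of_isClosed_subset (isClosed_tsupport χ) hχsupp) Complex.ofReal_zero
  have hχsm' : ContDiff ℝ (⊤ : ℕ∞) (fun y => (χ y : ℂ)) := Complex.ofRealCLM.contDiff.comp hχsm
  set g : 𝓢(Vec3, ℂ) := hχc.toSchwartzMap hχsm'
  have hg : ∀ x, g x = χ x := fun x => rfl
  have hX : ∀ p, ftS g p = ftC (fun y => (χ y : ℂ)) p := fun p => ftS_apply g p
  have hXe : ∀ q, ftS g (-q) = ftS g q := fun q => by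
    rw [hX, hX, ftC_eq_pw, ftC_eq_pw, ← integral_neg_eq_self]
    refine integral_congr_ae (ae_of_all _ fun x => ?_)
    simp only [hχeven]
    congr 1
    simp [pw]
  have hX1 : ((2 * π) ^ 3)⁻¹ * ∫ q, ‖ftS g q‖ ^ 2 = 1 := by
    simp_rw [ftS_apply]
    rw [← integral_norm_sq_ftC g, ← hχnorm]
    refine integral_congr_ae (ae_of_all _ fun x => ?_)
    simp [hg]
  obtain ⟨A₀, hA₀, hsymb⟩ := exists_symbol_le hX hXe hX1
  refine ⟨A₀, hA₀, fun A hA f => ?_⟩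
  have hR0 : 0 ≤ ∫ x : Vec3, ∑ k : Fin 3, ‖fderiv ℝ f x (Pi.single k 1)‖ ^ 2 :=
    integral_nonneg fun x => Finset.sum_nonneg fun k _ => by positivity
  rw [← ENNReal.ofReal_le_ofReal_iff hR0]
  refine (ofReal_localized_le f (w := fun p => max ((∑ k, (p k) ^ 2) - A) 0) hχsupp g.integrable
    (by fun_prop) (fun p => le_max_right _ _) (b := 1 / 18) (by norm_num)).trans ?_
  rw [integral_fderiv_sq f, ENNReal.ofReal_mul (by positivity),
    ofReal_integral_eq_lintegral_ofReal (integrable_sum_sq_mul_norm_sq (ftS f)) (ae_of_all _ fun p =>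
      mul_nonneg (Finset.sum_nonneg fun k _ => sq_nonneg _) (sq_nonneg _))]
  refine mul_le_mul_right (lintegral_mono fun p => ?_) _
  rw [ENNReal.ofReal_mul (Finset.sum_nonneg fun k _ => sq_nonneg _), ofReal_norm_sq]
  exact mul_le_mul_left (hsymb A hA p) _

theorem θu_eq_one {L : ℝ} (u x : Vec3) : θu L u x = θu 1 u (L⁻¹ • x) := by simp [θu]

theorem χu_eq_one (χ : Vec3 → ℝ) {L : ℝ} (u x : Vec3) : χu χ L u x = χu χ 1 u (L⁻¹ • x) := by
  simp [χu]

theorem integral_comp_inv_smul_vec3 {E : Type*} [NormedAddCommGroup E] [NormedSpace ℝ E]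
    (g : Vec3 → E) {L : ℝ} (hL : 0 < L) : ∫ x, g (L⁻¹ • x) = L ^ 3 • ∫ x, g x := by
  simpa [abs_of_pos hL] using Measure.integral_comp_inv_smul_of_nonneg volume g hL.le

theorem Qu_eq_one {L : ℝ} (hL : 0 < L) (u : Vec3) (φ : Vec3 → ℂ) (x : Vec3) :
    Qu L u φ x = Qu 1 u (fun y => φ (L • y)) (L⁻¹ • x) := by
  have h : ∫ y : Vec3, (θu L u y : ℂ) * φ y
      = (L : ℂ) ^ 3 * ∫ y : Vec3, (θu 1 u y : ℂ) * φ (L • y) := by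
    have h1 := integral_comp_inv_smul_vec3 (fun y : Vec3 => (θu 1 u y : ℂ) * φ (L • y)) hL
    simp only [smul_inv_smul₀ hL.ne', ← θu_eq_one] at h1
    rw [h1, Complex.real_smul]
    push_cast
    rfl
  have hLC : (L : ℂ) ^ 3 ≠ 0 := by simpa using hL.ne'
  rw [Qu, Qu, h, smul_inv_smul₀ hL.ne', ← θu_eq_one, inv_mul_cancel_left₀ hLC]
  simp

theorem ftC_comp_inv_smul (g : Vec3 → ℂ) {L : ℝ} (hL : 0 < L) (p : Vec3) :
    ftC (fun x => g (L⁻¹ • x)) p = (L : ℂ) ^ 3 * ftC g (L • p) := by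
  have h := integral_comp_inv_smul_vec3 (fun x => pw (L • p) x * g x) hL
  rw [ftC_eq_pw, ftC_eq_pw]
  rw [Complex.real_smul] at h
  push_cast at h
  rw [← h]
  refine integral_congr_ae (ae_of_all _ fun x => ?_)
  simp only [pw, Pi.smul_apply, smul_eq_mul]
  congr 5
  ext k
  field_simp

/-- The dilation `x ↦ f (L x)` of a Schwartz function. -/
def dilate (L : ℝ) (hL : 0 < L) (f : 𝓢(Vec3, ℂ)) : 𝓢(Vec3, ℂ) :=
  SchwartzMap.compCLMOfContinuousLinearEquiv ℝ
    (ContinuousLinearEquiv.smulLeft (Units.mk0 L hL.ne') : Vec3 ≃L[ℝ] Vec3) f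

theorem dilate_apply {L : ℝ} (hL : 0 < L) (f : 𝓢(Vec3, ℂ)) (x : Vec3) :
    dilate L hL f x = f (L • x) := rfl

theorem integral_fderiv_dilate {L : ℝ} (hL : 0 < L) (f : 𝓢(Vec3, ℂ)) :
    ∫ x : Vec3, ∑ k : Fin 3, ‖fderiv ℝ f x (Pi.single k 1)‖ ^ 2
      = L * ∫ x : Vec3, ∑ k : Fin 3, ‖fderiv ℝ (dilate L hL f) x (Pi.single k 1)‖ ^ 2 := by
  have h1 : ∀ x v, fderiv ℝ (dilate L hL f) x v = L • fderiv ℝ f (L • x) v := fun x v => by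
    have e : (dilate L hL f : Vec3 → ℂ) = fun x => f (L • x) := rfl
    rw [e, fderiv_comp_smul]
    rfl
  have h2 := integral_comp_inv_smul_vec3
    (fun x => ∑ k : Fin 3, ‖fderiv ℝ f (L • x) (Pi.single k 1)‖ ^ 2) hL
  simp only [smul_inv_smul₀ hL.ne', smul_eq_mul] at h2
  rw [h2]
  simp_rw [h1, norm_smul, mul_pow, ← Finset.mul_sum]
  rw [integral_const_mul, Real.norm_of_nonneg hL.le]
  ring

end

/-- **Kinetic energy localization inequality (Brietzke–Fournais–Solovej).**
For a smooth, even localization function `χ` supported in the unit cube with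
`∫χ² = 1`, there exist `b > 0` and `s₀ > 0` so that for all `0 < s < s₀`, `L > 0`
and Schwartz `f`, the full kinetic energy dominates the average over sliding boxes
of the localized kinetic forms
`Q_u[χ_u(−Δ−¼(sL)⁻²)₊χ_u + b/L²]Q_u`. -/
theorem kinetic_localization
    (χ : Vec3 → ℝ) (hχsm : ContDiff ℝ (⊤ : ℕ∞) χ) (hχeven : ∀ x, χ (-x) = χ x)
    (hχnorm : ∫ x : Vec3, (χ x) ^ 2 = 1) (hχsupp : tsupport χ ⊆ cube) :
    ∃ b > (0 : ℝ), ∃ s₀ > (0 : ℝ), ∀ s : ℝ, 0 < s → s < s₀ → ∀ L : ℝ, 0 < L →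
      ∀ f : SchwartzMap Vec3 ℂ,
      ∫ u : Vec3,
          (((2 * π) ^ 3)⁻¹ *
            ∫ p : Vec3,
              max ((∑ k, (p k) ^ 2) - (4 * s ^ 2 * L ^ 2)⁻¹) 0 *
                ‖ftC (fun x => (χu χ L u x : ℂ) * Qu L u (fun y => f y) x) p‖ ^ 2)
          + (b / L ^ 2) * ∫ x : Vec3, ‖Qu L u (fun y => f y) x‖ ^ 2
        ≤ ∫ x : Vec3, ∑ k : Fin 3, ‖fderiv ℝ (fun y => f y) x (Pi.single k 1)‖ ^ 2 := by
  obtain ⟨A₀, hA₀, hunit⟩ := exists_unit_localization χ hχsm hχeven hχnorm hχsupp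
  refine ⟨1 / 18, by norm_num, (2 * A₀)⁻¹, by positivity, fun s hs hs' L hL f => ?_⟩
  have hA : A₀ ≤ (4 * s ^ 2)⁻¹ := by
    have h1 : s * (2 * A₀) ≤ 1 := by
      rw [← le_div_iff₀ (by positivity), one_div]; exact hs'.le
    rw [le_inv_comm₀ (by positivity) (by positivity), ← one_div, le_div_iff₀ (by positivity)]
    nlinarith [mul_pos hs (by linarith : 0 < A₀)]
  have hF := mul_le_mul_of_nonneg_left (hunit _ hA (dilate L hL f)) hL.le
  rw [← integral_fderiv_dilate hL f, ← integral_const_mul] at hF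
  refine le_trans (le_of_eq (integral_congr_ae (ae_of_all _ fun u => ?_))) hF
  simp only [dilate_apply]
  have hQ : ∀ x, Qu L u (fun y => f y) x = Qu 1 u (fun y => f (L • y)) (L⁻¹ • x) :=
    Qu_eq_one hL u _
  have hft : ∀ p, ftC (fun x => (χu χ L u x : ℂ) * Qu L u (fun y => f y) x) p
      = (L : ℂ) ^ 3 * ftC (fun x => (χu χ 1 u x : ℂ) * Qu 1 u (fun y => f (L • y)) x) (L • p) := by
    intro p
    simp_rw [hQ, χu_eq_one χ (L := L) u]
    exact ftC_comp_inv_smul (fun x => (χu χ 1 u x : ℂ) * Qu 1 u (fun y => f (L • y)) x) hL p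
  simp_rw [hft, hQ]
  set h := ftC (fun x => (χu χ 1 u x : ℂ) * Qu 1 u (fun y => f (L • y)) x)
  have e1 := integral_comp_inv_smul_vec3 (fun x => ‖Qu 1 u (fun y => f (L • y)) x‖ ^ 2) hL
  have e2 := integral_comp_inv_smul_vec3 (fun p : Vec3 => max ((∑ k, (p k) ^ 2) -
    (4 * s ^ 2 * L ^ 2)⁻¹) 0 * ‖(L : ℂ) ^ 3 * h (L • p)‖ ^ 2) hL
  simp only [smul_eq_mul, smul_inv_smul₀ hL.ne'] at e1 e2
  have e3 : ∀ p : Vec3, max ((∑ k, ((L⁻¹ • p) k) ^ 2) - (4 * s ^ 2 * L ^ 2)⁻¹) 0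
      * ‖(L : ℂ) ^ 3 * h p‖ ^ 2
      = L ^ 4 * (max ((∑ k, (p k) ^ 2) - (4 * s ^ 2)⁻¹) 0 * ‖h p‖ ^ 2) := fun p => by
    have h1 : (∑ k, ((L⁻¹ • p) k) ^ 2) - (4 * s ^ 2 * L ^ 2)⁻¹
        = (L ^ 2)⁻¹ * ((∑ k, (p k) ^ 2) - (4 * s ^ 2)⁻¹) := by
      simp only [Pi.smul_apply, smul_eq_mul, mul_pow, ← Finset.mul_sum, mul_inv]
      ring
    have h2 : max ((L ^ 2)⁻¹ * ((∑ k, (p k) ^ 2) - (4 * s ^ 2)⁻¹)) 0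
        = (L ^ 2)⁻¹ * max ((∑ k, (p k) ^ 2) - (4 * s ^ 2)⁻¹) 0 := by
      rw [mul_max_of_nonneg _ _ (by positivity), mul_zero]
    rw [h1, h2, norm_mul, norm_pow, Complex.norm_real, Real.norm_of_nonneg hL.le]
    field_simp
  simp_rw [e3] at e2
  rw [integral_const_mul] at e2
  have e4 : ∫ p : Vec3, max ((∑ k, (p k) ^ 2) - (4 * s ^ 2 * L ^ 2)⁻¹) 0
      * ‖(L : ℂ) ^ 3 * h (L • p)‖ ^ 2
      = L * ∫ p : Vec3, max ((∑ k, (p k) ^ 2) - (4 * s ^ 2)⁻¹) 0 * ‖h p‖ ^ 2 := by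
    have hL3 : L ^ 3 ≠ 0 := by positivity
    refine mul_left_cancel₀ hL3 ?_
    rw [← e2]; ring
  rw [e1, e4]
  generalize ∫ p : Vec3, max ((∑ k, (p k) ^ 2) - (4 * s ^ 2)⁻¹) 0 * ‖h p‖ ^ 2 = a
  field_simp
end
end

section
/- Decomposition of the interaction potential into sliding localized potentials: Let v:ℝ³→[0,∞) be measurable and compactly supported, let f:ℝ³→ℝ be measurable and bounded with ∫_{ℝ³}v(z)f(z)dz = 8πa for some a∈ℝ. Let L>0 and χ∈C_c^∞(ℝ³) be real, even, with ∫χ²=1, supp χ ⊂ [-1/2,1/2]³, and such that (χ∗χ)(z/L)>0 for every z∈supp v. For u∈ℝ³ set χ_u(x)=χ(x/L−u), w_u(x,y)=χ_u(x)·v(x−y)/((χ∗χ)((x−y)/L))·χ_u(y), and for ρ>0 and N∈ℕ define 𝒲_u(x₁,…,x_N)=Σ_{1≤i<j≤N}w_u(x_i,x_j) − ρΣ_{i=1}^N∫_{ℝ³}w_u(x_i,y)f(x_i−y)dy. Then for every (x₁,…,x_N)∈(ℝ³)^N: ∫_{ℝ³} 𝒲_u(x₁,…,x_N) du = Σ_{1≤i<j≤N}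 v(x_i−x_j) − 8πNρa. -/
open MeasureTheory Filter Real

noncomputable section

/-- The convolution `(χ∗χ)(z) = ∫ χ(z−y)χ(y) dy`. -/
def convSelf (χ : Vec3 → ℝ) (z : Vec3) : ℝ := ∫ y : Vec3, χ (z - y) * χ y

/-- The sliding localized two-body potential
`w_u(x,y) = χ(x/L−u) · v(x−y)/((χ∗χ)((x−y)/L)) · χ(y/L−u)`
(the quotient being `0` whenever `v(x−y) = 0`, by the junk-value convention). -/
def wloc (χ v : Vec3 → ℝ) (L : ℝ) (u x y : Vec3) : ℝ :=
  χ (L⁻¹ • x - u) * (v (x - y) / convSelf χ (L⁻¹ • (x - y))) * χ (L⁻¹ • y - u)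

/-- The localized renormalized potential
`𝒲_u = Σ_{i<j} w_u(x_i,x_j) − ρ Σ_i ∫ w_u(x_i,y) f(x_i−y) dy`. -/
def Wloc (χ v f : Vec3 → ℝ) (L ρ : ℝ) (N : ℕ) (x : Fin N → Vec3) (u : Vec3) : ℝ :=
  (∑ i : Fin N, ∑ j : Fin N, if i < j then wloc χ v L u (x i) (x j) else 0)
    - ρ * ∑ i : Fin N, ∫ y : Vec3, wloc χ v L u (x i) y * f (x i - y)

lemma hasCompactSupport_of_tsupport_subset_cube {χ : Vec3 → ℝ} (h : tsupport χ ⊆ cube) :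
    HasCompactSupport χ := by
  have hc : cube = Set.Icc (fun _ => -(1 : ℝ) / 2) (fun _ => (1 : ℝ) / 2) := by
    ext y
    simp only [cube, Set.mem_ofPred_eq, Set.mem_Icc, Pi.le_def, forall_and]
  rw [hc] at h
  exact isCompact_Icc.of_isClosed_subset (isClosed_tsupport χ) h

lemma continuous_convSelf {χ : Vec3 → ℝ} (hc : Continuous χ) (hs : HasCompactSupport χ) :
    Continuous (convSelf χ) := by
  have h := hs.continuous_convolution_right (ContinuousLinearMap.mul ℝ ℝ)
    (μ := volume) (hc.locallyIntegrable) hc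
  refine h.congr fun z => integral_congr_ae (Eventually.of_forall fun y => ?_)
  exact mul_comm _ _

/-- Integrating over translations of an even function yields its self-convolution. -/
lemma integral_mul_translate_s13 {χ : Vec3 → ℝ} (he : ∀ z, χ (-z) = χ z) (p q : Vec3) :
    ∫ u : Vec3, χ (p - u) * χ (q - u) = convSelf χ (p - q) := by
  rw [← integral_add_left_eq_self (fun u : Vec3 => χ (p - u) * χ (q - u)) q, convSelf]
  refine integral_congr_ae (Eventually.of_forall fun u => ?_)
  have h : q - (q + u) = -u := by abel
  simp only [h, he, sub_add_eq_sub_sub]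

lemma integrable_mul_translate {χ : Vec3 → ℝ} (hc : Continuous χ) (hs : HasCompactSupport χ)
    (p q : Vec3) : Integrable fun u : Vec3 => χ (p - u) * χ (q - u) := by
  obtain ⟨C, hC⟩ := hc.bounded_above_of_compact_support hs
  exact ((hc.integrable_of_hasCompactSupport hs).comp_sub_left p).mul_bdd (c := C)
    (by fun_prop) (Eventually.of_forall fun u => hC _)

lemma integrable_div_of_pos_on_tsupport {v f c : Vec3 → ℝ} (hv : HasCompactSupport v)
    (hc : Continuous c) (hpos : ∀ z ∈ tsupport v, 0 < c z)
    (hvf : Integrable fun z => v z * f z) : Integrable fun z => v z / c z * f z := by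
  obtain ⟨δ, hδ, hle⟩ := hv.isCompact.exists_forall_le' hc.continuousOn hpos
  have hm : AEStronglyMeasurable (fun z => v z / c z * f z) := by
    have := hvf.aestronglyMeasurable.mul hc.measurable.inv.aestronglyMeasurable
    refine this.congr (Eventually.of_forall fun z => ?_)
    simp only [Pi.mul_apply, Pi.inv_apply]
    ring
  refine (hvf.norm.const_mul δ⁻¹).mono' hm (Eventually.of_forall fun z => ?_)
  by_cases hz : z ∈ tsupport v
  · have h : v z / c z * f z = (c z)⁻¹ * (v z * f z) := by ring
    rw [h, norm_mul, Real.norm_of_nonneg (inv_nonneg.2 (hpos z hz).le)]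
    have := hle z hz
    gcongr
  · simp [image_eq_zero_of_notMem_tsupport hz]

section

variable {χ v : Vec3 → ℝ} {L : ℝ}

lemma wloc_eq_mul (u x y : Vec3) : wloc χ v L u x y =
    v (x - y) / convSelf χ (L⁻¹ • (x - y)) * (χ (L⁻¹ • x - u) * χ (L⁻¹ • y - u)) := by
  rw [wloc]
  ring

lemma integrable_wloc (hc : Continuous χ) (hs : HasCompactSupport χ) (x y : Vec3) :
    Integrable fun u => wloc χ v L u x y := by
  simp only [wloc_eq_mul]
  exact (integrable_mul_translate hc hs _ _).const_mul _

lemma integral_wloc (he : ∀ z, χ (-z) = χ z)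
    (hpos : ∀ z ∈ tsupport v, 0 < convSelf χ (L⁻¹ • z)) (x y : Vec3) :
    ∫ u, wloc χ v L u x y = v (x - y) := by
  simp only [wloc_eq_mul]
  rw [integral_const_mul, integral_mul_translate_s13 he, ← smul_sub]
  by_cases hz : x - y ∈ tsupport v
  · exact div_mul_cancel₀ _ (hpos _ hz).ne'
  · simp [image_eq_zero_of_notMem_tsupport hz]

lemma integrable_wloc_mul_prod {f : Vec3 → ℝ} (hc : Continuous χ) (hs : HasCompactSupport χ)
    (hv : HasCompactSupport v) (hvf : Integrable fun z => v z * f z)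
    (hpos : ∀ z ∈ tsupport v, 0 < convSelf χ (L⁻¹ • z)) (x : Vec3) :
    Integrable (fun p : Vec3 × Vec3 => wloc χ v L p.1 x p.2 * f (x - p.2))
      (volume.prod volume) := by
  obtain ⟨C, hC⟩ := hc.bounded_above_of_compact_support hs
  have hcc : Continuous fun z : Vec3 => convSelf χ (L⁻¹ • z) :=
    (continuous_convSelf hc hs).comp (continuous_const_smul _)
  have h₁ := (hc.integrable_of_hasCompactSupport hs (μ := volume)).comp_sub_left (L⁻¹ • x)
  have h₂ := (integrable_div_of_pos_on_tsupport hv hcc hpos hvf).comp_sub_left x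
  have h₃ := (h₁.mul_prod h₂).mul_bdd (c := C)
    (g := fun p : Vec3 × Vec3 => χ (L⁻¹ • p.2 - p.1))
    (Continuous.aestronglyMeasurable (by fun_prop)) (Eventually.of_forall fun p => hC _)
  refine h₃.congr (Eventually.of_forall fun p => ?_)
  simp only [wloc]
  ring

lemma integral_integral_wloc_mul {f : Vec3 → ℝ} (hc : Continuous χ) (hs : HasCompactSupport χ)
    (he : ∀ z, χ (-z) = χ z) (hv : HasCompactSupport v)
    (hvf : Integrable fun z => v z * f z)
    (hpos : ∀ z ∈ tsupport v, 0 < convSelf χ (L⁻¹ • z)) (x : Vec3) :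
    ∫ u, ∫ y, wloc χ v L u x y * f (x - y) = ∫ z, v z * f z := by
  rw [integral_integral_swap (integrable_wloc_mul_prod hc hs hv hvf hpos x)]
  simp only [integral_mul_const, integral_wloc he hpos]
  exact integral_sub_left_eq_self (fun z => v z * f z) volume x

end

/-- **Decomposition of the interaction potential into sliding localized potentials
(Brietzke–Fournais–Solovej).** If `∫ v f = 8πa` and `χ` is a smooth even
localization function supported in the unit cube with `∫χ² = 1` and
`(χ∗χ)(z/L) > 0` on the support of `v`, then
`∫ 𝒲_u du = Σ_{i<j} v(x_i−x_j) − 8πNρa`. -/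
theorem interaction_decomposition
    (v : Vec3 → ℝ) (hvmeas : Measurable v) (hvpos : ∀ z, 0 ≤ v z)
    (hvsupp : HasCompactSupport v)
    (f : Vec3 → ℝ) (hfmeas : Measurable f) (hfbdd : ∃ M, ∀ z, |f z| ≤ M)
    (a : ℝ) (hvf_int : Integrable (fun z : Vec3 => v z * f z))
    (hvf : ∫ z : Vec3, v z * f z = 8 * π * a)
    (L : ℝ) (hL : 0 < L)
    (χ : Vec3 → ℝ) (hχsm : ContDiff ℝ (⊤ : ℕ∞) χ) (hχeven : ∀ z, χ (-z) = χ z)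
    (hχnorm : ∫ z : Vec3, (χ z) ^ 2 = 1) (hχsupp : tsupport χ ⊆ cube)
    (hconv : ∀ z ∈ tsupport v, 0 < convSelf χ (L⁻¹ • z))
    (ρ : ℝ) (N : ℕ) (x : Fin N → Vec3) :
    ∫ u : Vec3, Wloc χ v f L ρ N x u
      = (∑ i : Fin N, ∑ j : Fin N, if i < j then v (x i - x j) else 0)
        - 8 * π * N * ρ * a := by
  have hc := hχsm.continuous
  have hs := hasCompactSupport_of_tsupport_subset_cube hχsupp
  have hpair (i j : Fin N) :
      Integrable fun u => if i < j then wloc χ v L u (x i) (x j) else 0 := by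
    split_ifs
    · exact integrable_wloc hc hs _ _
    · exact integrable_zero _ _ _
  have hone (i : Fin N) : Integrable fun u => ∫ y, wloc χ v L u (x i) y * f (x i - y) :=
    (integrable_wloc_mul_prod hc hs hvsupp hvf_int hconv (x i)).integral_prod_left
  simp only [Wloc]
  rw [integral_sub
      (integrable_finsetSum _ fun i _ => integrable_finsetSum _ fun j _ => hpair i j)
      ((integrable_finsetSum _ fun i _ => hone i).const_mul ρ),
    integral_const_mul, integral_finsetSum _ fun i _ => hone i,
    integral_finsetSum _ fun i _ => integrable_finsetSum _ fun j _ => hpair i j]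
  simp only [integral_integral_wloc_mul hc hs hχeven hvsupp hvf_int hconv, hvf,
    Finset.sum_const, Finset.card_univ, Fintype.card_fin, nsmul_eq_mul]
  congr 1
  · refine Finset.sum_congr rfl fun i _ => ?_
    rw [integral_finsetSum _ fun j _ => hpair i j]
    refine Finset.sum_congr rfl fun j _ => ?_
    split_ifs
    · exact integral_wloc hχeven hconv _ _
    · exact integral_zero _ _
  · ring
end
end
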